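/- arXiv:1109.5297 — 6 statements merged into one kernel-verified Lean document; each statement's English description precedes it below -/
import Mathlib

section
/- The Liouville operator A is antisymmetric with respect to the space–time inner product Σ_i ⟨·, τ_i ·⟩: for all g, h in C, Σ_{i∈ℤ} ∫_Ω (τ_i g)(A h) dν_β = − Σ_{i∈ℤ} ∫_Ω (A g)(τ_i h) dν_β, where in both sums all but finitely many terms vanish. -/
/-!
Write `ρ` for the density of a finite-dimensional marginal of `ν_β`. The vector field
`Y_{i,j} = p_i ∂/∂r_j − V'(r_j) ∂/∂p_i` is divergence free and satisfies `Y_{i,j} ρ = 0`, since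
`∂ρ/∂r_j = −β V'(r_j) ρ` and `∂ρ/∂p_i = −β p_i ρ`. Integrating by parts, `∫ Y_{i,j} F ρ = 0` for
every bounded `C¹` function `F` with bounded derivative (`integral_Yw_mul_rho`); the integrals
converge because `V` grows at least quadratically and `V'` at most linearly
(`potential_bounds`, `integrable_weight`). Applied to a product `F = f k`, this makes each
`Y_{i,j}` antisymmetric in `L²(ν_β)` (`IsGibbs.Yz_antisymm`), and summing over the finitely many
relevant terms makes `A` antisymmetric there (`IsGibbs.Aop_antisymm`).

For the space–time product, `A` commutes with shifts (`Aop_tauf`) and `ν_β` is shift invariant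
(`IsGibbs.integral_tauf`), so
`∫ (τ_i g)(A h) = −∫ (τ_i A g) h = −∫ (A g)(τ_{−i} h)`, and reindexing `i ↦ −i` gives the identity.

Finiteness of the sums also comes from antisymmetry: when the windows of `τ_i g` and `h` are at
distance at least two, no pair `{m, m + 1}` meets both, so in each term
`∫ (τ_i g) Y h = −∫ (Y τ_i g) h` one of the two functions is annihilated by `Y`.
-/

open MeasureTheory Real

/-- The configuration space `Ω = (ℝ²)^ℤ` of the infinite chain. -/
abbrev Om : Type := (ℤ → ℝ) × (ℤ → ℝ)

/-- Partial derivative with respect to the momentum `p i`. -/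
noncomputable def pdp (i : ℤ) (f : Om → ℝ) (ω : Om) : ℝ :=
  deriv (fun t => f (Function.update ω.1 i t, ω.2)) (ω.1 i)

/-- Partial derivative with respect to the position variable `r j`. -/
noncomputable def pdr (j : ℤ) (f : Om → ℝ) (ω : Om) : ℝ :=
  deriv (fun t => f (ω.1, Function.update ω.2 j t)) (ω.2 j)

/-- The vector field `Y_{i,j} f = p_i ∂f/∂r_j − V'(r_j) ∂f/∂p_i`. -/
noncomputable def Yz (V : ℝ → ℝ) (i j : ℤ) (f : Om → ℝ) : Om → ℝ :=
  fun ω => ω.1 i * pdr j f ω - deriv V (ω.2 j) * pdp i f ω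

/-- The vector field `X_i = Y_{i,i}`. -/
noncomputable def Xz (V : ℝ → ℝ) (i : ℤ) (f : Om → ℝ) : Om → ℝ :=
  Yz V i i f

/-- The shift of configurations: `(τ_j ω)_i = ω_{i+j}`. -/
def shiftc (j : ℤ) (ω : Om) : Om :=
  (fun i => ω.1 (i + j), fun i => ω.2 (i + j))

/-- The shift on functions: `(τ_j f)(ω) = f(τ_j ω)`. -/
def tauf (j : ℤ) (f : Om → ℝ) : Om → ℝ :=
  fun ω => f (shiftc j ω)

/-- The Liouville operator `A f = Σ_{i∈ℤ} (X_i f − Y_{i,i+1} f)`; for local `f`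
all but finitely many terms of the sum vanish. -/
noncomputable def Aop (V : ℝ → ℝ) (f : Om → ℝ) : Om → ℝ :=
  fun ω => ∑ᶠ i : ℤ, (Xz V i f ω - Yz V i (i + 1) f ω)

/-- Replace the coordinates of `ω` inside the finite window `s` by `x`. -/
def patch (s : Finset ℤ) (x : (s → ℝ) × (s → ℝ)) (ω : Om) : Om :=
  (fun i => if h : i ∈ s then x.1 ⟨i, h⟩ else ω.1 i,
   fun i => if h : i ∈ s then x.2 ⟨i, h⟩ else ω.2 i)

/-- `f` is a smooth local function with compact support and zero `ν`-average:
it depends only on the coordinates in some finite window `s`, is smooth with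
compact support as a function of these coordinates, and has mean zero. -/
def IsCyl (ν : Measure Om) (f : Om → ℝ) : Prop :=
  ∃ s : Finset ℤ,
    (∀ ω ω' : Om, (∀ i ∈ s, ω.1 i = ω'.1 i) → (∀ i ∈ s, ω.2 i = ω'.2 i) →
      f ω = f ω') ∧
    (∀ ω : Om, ContDiff ℝ (⊤ : ℕ∞) (fun x : (s → ℝ) × (s → ℝ) => f (patch s x ω))) ∧
    (∀ ω : Om, HasCompactSupport (fun x : (s → ℝ) × (s → ℝ) => f (patch s x ω))) ∧
    ∫ ω, f ω ∂ν = 0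

/-- `ν` is the infinite-volume Gibbs measure `ν_β`: every finite-dimensional
marginal has the product Gibbs density with respect to Lebesgue measure. -/
def IsGibbs (V : ℝ → ℝ) (β : ℝ) (ν : Measure Om) : Prop :=
  ∀ s : Finset ℤ,
    Measure.map (fun ω : Om => ((fun i : s => ω.1 i), (fun i : s => ω.2 i))) ν =
      volume.withDensity (fun x : (s → ℝ) × (s → ℝ) => ENNReal.ofReal
        (∏ i : s, Real.exp (-β * ((x.1 i) ^ 2 / 2 + V (x.2 i))) /
          (Real.sqrt (2 * Real.pi / β) * ∫ r : ℝ, Real.exp (-β * V r))))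


/-! ### Functions of finitely many coordinates -/

/-- The finite-dimensional configuration space of the window `w`. -/
abbrev Ew (w : Finset ℤ) : Type := (w → ℝ) × (w → ℝ)

/-- Restriction of a configuration to the window `w`. -/
def res (w : Finset ℤ) (ω : Om) : Ew w := (fun i => ω.1 i, fun i => ω.2 i)

/-- `f` depends only on the coordinates in `w`, and is a bounded `C¹` function of them with
bounded derivative. -/
def NiceOn (w : Finset ℤ) (f : Om → ℝ) : Prop :=
  ∃ F : Ew w → ℝ, ContDiff ℝ 1 F ∧ (∃ C, ∀ x, |F x| ≤ C) ∧ (∃ C, ∀ x, ‖fderiv ℝ F x‖ ≤ C) ∧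
    ∀ ω, f ω = F (res w ω)

/-- `f` depends only on the coordinates in `w`, with no regularity required. -/
def LocalOn (w : Finset ℤ) (f : Om → ℝ) : Prop :=
  ∀ ω ω' : Om, res w ω = res w ω' → f ω = f ω'

lemma res_eq_iff {w : Finset ℤ} {ω ω' : Om} :
    res w ω = res w ω' ↔ (∀ i ∈ w, ω.1 i = ω'.1 i) ∧ (∀ i ∈ w, ω.2 i = ω'.2 i) := by
  simp [res, Prod.ext_iff, funext_iff]

@[fun_prop]
lemma continuous_res (w : Finset ℤ) : Continuous (res w) := by
  unfold res; fun_prop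

lemma NiceOn.localOn {w : Finset ℤ} {f : Om → ℝ} (hf : NiceOn w f) : LocalOn w f := by
  obtain ⟨F, -, -, -, h⟩ := hf
  intro ω ω' e
  rw [h, h, e]

lemma LocalOn.mono {s w : Finset ℤ} {f : Om → ℝ} (hf : LocalOn s f) (hsw : s ⊆ w) :
    LocalOn w f := fun ω ω' e => by
  rw [res_eq_iff] at e
  exact hf _ _ (res_eq_iff.2 ⟨fun i hi => e.1 i (hsw hi), fun i hi => e.2 i (hsw hi)⟩)

/-- Pulling back along a relabelling of coordinates preserves niceness; this covers both
enlarging the window and shifting. -/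
lemma NiceOn.comp {s w : Finset ℤ} {f : Om → ℝ} (hf : NiceOn s f) (T : Om → Om) (σ : s → w)
    (hT : ∀ ω, res s (T ω) = ((res w ω).1 ∘ σ, (res w ω).2 ∘ σ)) :
    NiceOn w (fun ω => f (T ω)) := by
  obtain ⟨F, hF, ⟨C, hC⟩, ⟨D, hD⟩, h⟩ := hf
  let l : (w → ℝ) →L[ℝ] (s → ℝ) := ContinuousLinearMap.pi fun k => ContinuousLinearMap.proj (σ k)
  let L : Ew w →L[ℝ] Ew s := l.prodMap l
  refine ⟨F ∘ L, hF.comp L.contDiff, ⟨C, fun x => hC _⟩, ⟨D * ‖L‖, fun x => ?_⟩, fun ω => ?_⟩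
  · rw [fderiv_comp x (hF.differentiable one_ne_zero _) L.differentiableAt, L.fderiv]
    refine (ContinuousLinearMap.opNorm_comp_le _ _).trans ?_
    gcongr
    exact hD _
  · simp only [h, hT]; rfl

lemma NiceOn.mono {s w : Finset ℤ} {f : Om → ℝ} (hf : NiceOn s f) (hsw : s ⊆ w) : NiceOn w f :=
  hf.comp id (fun k => ⟨k, hsw k.2⟩) fun _ => rfl

lemma NiceOn.tauf {s : Finset ℤ} {f : Om → ℝ} (hf : NiceOn s f) (j : ℤ) :
    NiceOn (s.map (addRightEmbedding j)) (tauf j f) :=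
  hf.comp (shiftc j) (fun k => ⟨k + j, by simp⟩) fun _ => rfl

lemma IsCyl.niceOn {ν : Measure Om} {f : Om → ℝ} (hf : IsCyl ν f) : ∃ s, NiceOn s f := by
  obtain ⟨s, hloc, hsm, hcs, -⟩ := hf
  refine ⟨s, fun x => f (patch s x 0), (hsm 0).of_le (by exact_mod_cast le_top), ?_, ?_, ?_⟩
  · exact (hsm 0).continuous.bounded_above_of_compact_support (hcs 0)
  · exact ((hsm 0).continuous_fderiv (by simp)).bounded_above_of_compact_support
      ((hcs 0).fderiv (𝕜 := ℝ))
  · intro ω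
    apply hloc <;> intro i hi <;> simp [patch, res, hi]

/-! ### The vector fields on local functions -/

lemma LocalOn.pdp_eq_zero {w : Finset ℤ} {f : Om → ℝ} (hf : LocalOn w f) {i : ℤ} (hi : i ∉ w)
    (ω : Om) : pdp i f ω = 0 := by
  unfold pdp
  have : (fun t => f (Function.update ω.1 i t, ω.2)) = fun _ => f ω := by
    funext t
    apply hf
    refine res_eq_iff.2 ⟨fun k hk => ?_, fun k hk => rfl⟩
    exact Function.update_of_ne (by rintro rfl; exact hi hk) _ _
  rw [this, deriv_const]

lemma LocalOn.pdr_eq_zero {w : Finset ℤ} {f : Om → ℝ} (hf : LocalOn w f) {i : ℤ} (hi : i ∉ w)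
    (ω : Om) : pdr i f ω = 0 := by
  unfold pdr
  have : (fun t => f (ω.1, Function.update ω.2 i t)) = fun _ => f ω := by
    funext t
    apply hf
    refine res_eq_iff.2 ⟨fun k hk => rfl, fun k hk => ?_⟩
    exact Function.update_of_ne (by rintro rfl; exact hi hk) _ _
  rw [this, deriv_const]

lemma LocalOn.Yz_eq_zero {w : Finset ℤ} {f : Om → ℝ} (hf : LocalOn w f) (V : ℝ → ℝ) {i j : ℤ}
    (hi : i ∉ w) (hj : j ∉ w) (ω : Om) : Yz V i j f ω = 0 := by
  simp [Yz, hf.pdp_eq_zero hi, hf.pdr_eq_zero hj]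

lemma res_update_fst {w : Finset ℤ} (i : w) (ω : Om) (t : ℝ) :
    res w (Function.update ω.1 i t, ω.2) = (Function.update (res w ω).1 i t, (res w ω).2) := by
  refine Prod.ext (funext fun k => ?_) rfl
  simp only [res, Function.update_apply, Subtype.ext_iff]

lemma res_update_snd {w : Finset ℤ} (i : w) (ω : Om) (t : ℝ) :
    res w (ω.1, Function.update ω.2 i t) = ((res w ω).1, Function.update (res w ω).2 i t) := by
  refine Prod.ext rfl (funext fun k => ?_)
  simp only [res, Function.update_apply, Subtype.ext_iff]

lemma pdp_eq {w : Finset ℤ} {f : Om → ℝ} {F : Ew w → ℝ} (hF : ContDiff ℝ 1 F)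
    (h : ∀ ω, f ω = F (res w ω)) (i : w) (ω : Om) :
    pdp i f ω = fderiv ℝ F (res w ω) (Pi.single i 1, 0) := by
  unfold pdp
  simp only [h, res_update_fst]
  have e : (Function.update (res w ω).1 i (ω.1 i), (res w ω).2) = res w ω :=
    Prod.ext (Function.update_eq_self i (res w ω).1) rfl
  have h1 : HasFDerivAt F (fderiv ℝ F (res w ω))
      (Function.update (res w ω).1 i (ω.1 i), (res w ω).2) := by
    rw [e]; exact (hF.differentiable one_ne_zero _).hasFDerivAt
  exact (h1.comp_hasDerivAt (ω.1 i) ((hasDerivAt_update (res w ω).1 i (ω.1 i)).prodMk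
    (hasDerivAt_const (ω.1 i) (res w ω).2))).deriv

lemma pdr_eq {w : Finset ℤ} {f : Om → ℝ} {F : Ew w → ℝ} (hF : ContDiff ℝ 1 F)
    (h : ∀ ω, f ω = F (res w ω)) (i : w) (ω : Om) :
    pdr i f ω = fderiv ℝ F (res w ω) (0, Pi.single i 1) := by
  unfold pdr
  simp only [h, res_update_snd]
  have e : ((res w ω).1, Function.update (res w ω).2 i (ω.2 i)) = res w ω :=
    Prod.ext rfl (Function.update_eq_self i (res w ω).2)
  have h1 : HasFDerivAt F (fderiv ℝ F (res w ω))
      ((res w ω).1, Function.update (res w ω).2 i (ω.2 i)) := by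
    rw [e]; exact (hF.differentiable one_ne_zero _).hasFDerivAt
  exact (h1.comp_hasDerivAt (ω.2 i) ((hasDerivAt_const (ω.2 i) (res w ω).1).prodMk
    (hasDerivAt_update (res w ω).2 i (ω.2 i)))).deriv

/-- The finite-dimensional form of `Yz V i j` when `i` and `j` lie in the window. -/
noncomputable def Yw (V : ℝ → ℝ) {w : Finset ℤ} (i j : w) (F : Ew w → ℝ) (x : Ew w) : ℝ :=
  x.1 i * fderiv ℝ F x (0, Pi.single j 1) - deriv V (x.2 j) * fderiv ℝ F x (Pi.single i 1, 0)

lemma Yz_eq {w : Finset ℤ} {f : Om → ℝ} {F : Ew w → ℝ} (hF : ContDiff ℝ 1 F)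
    (h : ∀ ω, f ω = F (res w ω)) (V : ℝ → ℝ) (i j : w) (ω : Om) :
    Yz V i j f ω = Yw V i j F (res w ω) := by
  simp only [Yz, Yw, pdp_eq hF h, pdr_eq hF h]
  rfl

lemma continuous_Yw {V : ℝ → ℝ} (hV : Continuous (deriv V)) {w : Finset ℤ} (i j : w)
    {F : Ew w → ℝ} (hF : ContDiff ℝ 1 F) : Continuous (Yw V i j F) := by
  have := hF.continuous_fderiv one_ne_zero
  unfold Yw
  fun_prop

lemma NiceOn.continuous {w : Finset ℤ} {f : Om → ℝ} (hf : NiceOn w f) : Continuous f := by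
  obtain ⟨F, hF, -, -, h⟩ := hf
  rw [funext h]
  exact hF.continuous.comp (continuous_res w)

lemma NiceOn.continuous_Yz {w : Finset ℤ} {f : Om → ℝ} (hf : NiceOn w f) {V : ℝ → ℝ}
    (hV : Continuous (deriv V)) (i j : ℤ) : Continuous (Yz V i j f) := by
  obtain ⟨F, hF, -, -, h⟩ := hf.mono (show w ⊆ w ∪ {i, j} from Finset.subset_union_left)
  have := Yz_eq hF h V ⟨i, by simp⟩ ⟨j, by simp⟩
  rw [funext this]
  exact (continuous_Yw hV _ _ hF).comp (continuous_res _)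

lemma NiceOn.localOn_Yz {w : Finset ℤ} {f : Om → ℝ} (hf : NiceOn w f) (V : ℝ → ℝ) {i j : ℤ}
    (hi : i ∈ w) (hj : j ∈ w) : LocalOn w (Yz V i j f) := by
  obtain ⟨F, hF, -, -, h⟩ := hf
  have := Yz_eq hF h V ⟨i, hi⟩ ⟨j, hj⟩
  intro ω ω' e
  rw [this, this, e]

/-- The sum defining `Aop` may be restricted to any finite set of bonds outside of which no
coordinate of the window is touched. -/
lemma LocalOn.Aop_eq_sum {w : Finset ℤ} {f : Om → ℝ} (hf : LocalOn w f) (V : ℝ → ℝ)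
    {K : Finset ℤ} (hK : ∀ i, i ∉ K → i ∉ w ∧ i + 1 ∉ w) (ω : Om) :
    Aop V f ω = ∑ i ∈ K, (Yz V i i f ω - Yz V i (i + 1) f ω) := by
  refine finsum_eq_sum_of_support_subset _ fun i hi => ?_
  by_contra hiK
  obtain ⟨h0, h1⟩ := hK i hiK
  exact hi (by simp [Xz, hf.Yz_eq_zero V h0 h0, hf.Yz_eq_zero V h0 h1])

/-- The vector fields are covariant under the shift, so `A` commutes with it. -/
lemma Aop_tauf (V : ℝ → ℝ) (j : ℤ) (f : Om → ℝ) : Aop V (tauf j f) = tauf j (Aop V f) := by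
  have hu : ∀ (a : ℤ → ℝ) (m : ℤ) (t : ℝ), (fun k => Function.update a (m + j) t (k + j)) =
      Function.update (fun k => a (k + j)) m t := by
    intro a m t
    funext k
    simp [Function.update_apply]
  have hp : ∀ m ω, pdp (m + j) (tauf j f) ω = pdp m f (shiftc j ω) := by
    intro m ω
    simp only [pdp, tauf, shiftc, hu]
  have hr : ∀ m ω, pdr (m + j) (tauf j f) ω = pdr m f (shiftc j ω) := by
    intro m ω
    simp only [pdr, tauf, shiftc, hu]
  have hY : ∀ m n ω, Yz V (m + j) (n + j) (tauf j f) ω = Yz V m n f (shiftc j ω) := by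
    intro m n ω
    simp only [Yz, hp, hr]
    rfl
  funext ω
  simp only [Aop, tauf, Xz]
  rw [← finsum_comp_equiv (Equiv.addRight j)]
  refine finsum_congr fun m => ?_
  have := hY m (m + 1) ω
  simp only [Equiv.coe_addRight]
  rw [← hY, ← hY, add_right_comm m 1 j]

/-! ### The Gibbs density -/

/-- The density of the finite-dimensional marginal of the Gibbs measure in the window `w`. -/
noncomputable def rho (V : ℝ → ℝ) (β : ℝ) (w : Finset ℤ) (x : Ew w) : ℝ :=
  ∏ i : w, Real.exp (-β * ((x.1 i) ^ 2 / 2 + V (x.2 i))) /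
    (Real.sqrt (2 * Real.pi / β) * ∫ r : ℝ, Real.exp (-β * V r))

lemma rho_nonneg (V : ℝ → ℝ) (β : ℝ) (w : Finset ℤ) (x : Ew w) : 0 ≤ rho V β w x := by
  refine Finset.prod_nonneg fun i _ => ?_
  have : 0 ≤ ∫ r : ℝ, Real.exp (-β * V r) := integral_nonneg fun r => (Real.exp_pos _).le
  positivity

lemma continuous_rho {V : ℝ → ℝ} (hV : Continuous V) (β : ℝ) (w : Finset ℤ) :
    Continuous (rho V β w) := by
  unfold rho
  fun_prop

/-- Quadratic growth of the potential and linear growth of the force, from `δm ≤ V'' ≤ δp`. -/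
lemma potential_bounds {V : ℝ → ℝ} (hV : ContDiff ℝ (⊤ : ℕ∞) V) (hV0 : V 0 = 0)
    (hdV0 : deriv V 0 = 0) {δm δp : ℝ} (hδm : 0 < δm)
    (hVpp : ∀ r : ℝ, δm ≤ deriv (deriv V) r ∧ deriv (deriv V) r ≤ δp) :
    (∀ r, |deriv V r| ≤ δp * |r|) ∧ ∀ r, δm / 2 * r ^ 2 ≤ V r := by
  have hV1 : Differentiable ℝ V := hV.differentiable (by simp)
  have hV2 : Differentiable ℝ (deriv V) :=
    ((contDiff_infty_iff_deriv.1 hV).2).differentiable (by simp)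
  have m1 : Monotone fun r => deriv V r - δm * r := by
    refine monotone_of_hasDerivAt_nonneg (f' := fun r => deriv (deriv V) r - δm * 1)
      (fun r => (hV2 r).hasDerivAt.sub ((hasDerivAt_id r).const_mul δm)) fun r => ?_
    have := (hVpp r).1
    simp only [Pi.zero_apply]; linarith
  have m2 : Monotone fun r => δp * r - deriv V r := by
    refine monotone_of_hasDerivAt_nonneg (f' := fun r => δp * 1 - deriv (deriv V) r)
      (fun r => ((hasDerivAt_id r).const_mul δp).sub (hV2 r).hasDerivAt) fun r => ?_
    have := (hVpp r).2
    simp only [Pi.zero_apply]; linarith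
  have hW : ∀ r, HasDerivAt (fun r => V r - δm / 2 * r ^ 2) (deriv V r - δm * r) r := by
    intro r
    refine ((hV1 r).hasDerivAt.sub ((hasDerivAt_pow 2 r).const_mul (δm / 2))).congr_deriv ?_
    push_cast; ring
  have hc : ContinuousOn (fun r => V r - δm / 2 * r ^ 2) Set.univ :=
    fun r _ => (hW r).continuousAt.continuousWithinAt
  refine ⟨fun r => ?_, fun r => ?_⟩
  · rcases le_total 0 r with h | h
    · have h1 := m1 h
      have h2 := m2 h
      simp only [hdV0, mul_zero, sub_zero] at h1 h2
      rw [abs_of_nonneg h, abs_of_nonneg (by nlinarith)]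
      linarith
    · have h1 := m1 h
      have h2 := m2 h
      simp only [hdV0, mul_zero, sub_zero] at h1 h2
      rw [abs_of_nonpos h, abs_of_nonpos (by nlinarith)]
      linarith
  · rcases le_total 0 r with h | h
    · have : MonotoneOn (fun r => V r - δm / 2 * r ^ 2) (Set.Ici 0) := by
        refine monotoneOn_of_deriv_nonneg (convex_Ici 0) (hc.mono (Set.subset_univ _))
          (fun r _ => (hW r).differentiableAt.differentiableWithinAt) fun r hr => ?_
        rw [interior_Ici] at hr
        have := m1 (le_of_lt hr)
        simp only [hdV0, mul_zero, sub_zero] at this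
        rw [(hW r).deriv]; linarith
      have := this (Set.mem_Ici.2 le_rfl) (Set.mem_Ici.2 h) h
      simp only [hV0] at this
      linarith
    · have : AntitoneOn (fun r => V r - δm / 2 * r ^ 2) (Set.Iic 0) := by
        refine antitoneOn_of_deriv_nonpos (convex_Iic 0) (hc.mono (Set.subset_univ _))
          (fun r _ => (hW r).differentiableAt.differentiableWithinAt) fun r hr => ?_
        rw [interior_Iic] at hr
        have := m1 (le_of_lt hr)
        simp only [hdV0, mul_zero, sub_zero] at this
        rw [(hW r).deriv]; linarith
      have := this (Set.mem_Iic.2 h) (Set.mem_Iic.2 le_rfl) h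
      simp only [hV0] at this
      linarith

/-- The weight that dominates all integrands below: linear growth in one momentum and in one
force, times the Gibbs density. -/
lemma integrable_weight {V : ℝ → ℝ} (hVc : Continuous V) (hVc' : Continuous (deriv V))
    {δm δp β : ℝ} (hδm : 0 < δm) (hβ : 0 < β)
    (hV' : ∀ r, |deriv V r| ≤ δp * |r|) (hVq : ∀ r, δm / 2 * r ^ 2 ≤ V r)
    {w : Finset ℤ} (i j : w) :
    Integrable fun x : Ew w => (1 + |x.1 i|) * (1 + |deriv V (x.2 j)|) * rho V β w x := by
  have gauss : ∀ {b : ℝ}, 0 < b → ∀ D, Integrable fun r : ℝ => (1 + D * |r|) * exp (-b * r ^ 2) := by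
    intro b hb D
    refine ((integrable_exp_neg_mul_sq hb).add
      ((integrable_mul_exp_neg_mul_sq hb).abs.const_mul D)).congr (.of_forall fun r => ?_)
    simp only [Pi.add_apply, abs_mul, abs_exp]
    ring
  set c := Real.sqrt (2 * Real.pi / β) * ∫ r : ℝ, Real.exp (-β * V r) with hc
  have hbm : 0 < β * (δm / 2) := by positivity
  have hle : ∀ r, exp (-β * V r) ≤ exp (-(β * (δm / 2)) * r ^ 2) := fun r =>
    exp_le_exp.2 (by nlinarith [mul_le_mul_of_nonneg_left (hVq r) hβ.le])
  -- the one-coordinate factors, with the weight attached to the coordinate `i`, resp. `j`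
  have ha : ∀ k : w, Integrable fun p : ℝ =>
      (if k = i then 1 + |p| else 1) * exp (-(β / 2) * p ^ 2) := by
    intro k
    split_ifs
    · simpa using gauss (half_pos hβ) 1
    · simpa using gauss (half_pos hβ) 0
  have hb : ∀ k : w, Integrable fun r : ℝ =>
      (if k = j then 1 + |deriv V r| else 1) * (exp (-β * V r) / c) := by
    intro k
    split_ifs
    · have : Integrable fun r : ℝ => (1 + |deriv V r|) * exp (-β * V r) := by
        refine (gauss hbm δp).mono' (by fun_prop) (.of_forall fun r => ?_)
        rw [Real.norm_of_nonneg (by positivity)]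
        exact mul_le_mul (by linarith [hV' r]) (hle r) (exp_pos _).le
          (by linarith [hV' r, abs_nonneg (deriv V r)])
      exact (this.div_const c).congr (.of_forall fun r => by simp only [mul_div_assoc])
    · have : Integrable fun r : ℝ => exp (-β * V r) := by
        refine (integrable_exp_neg_mul_sq hbm).mono' (by fun_prop) (.of_forall fun r => ?_)
        rw [Real.norm_of_nonneg (by positivity)]
        exact hle r
      simpa using this.div_const c
  have key := (Integrable.fintype_prod ha).mul_prod (Integrable.fintype_prod hb)
  refine Integrable.congr key (.of_forall fun x => ?_)
  simp only [Finset.prod_mul_distrib, Finset.prod_ite_eq', Finset.mem_univ, if_true, rho, ← hc]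
  have : ∀ k : w, exp (-β * (x.1 k ^ 2 / 2 + V (x.2 k))) / c =
      exp (-(β / 2) * x.1 k ^ 2) * (exp (-β * V (x.2 k)) / c) := by
    intro k
    rw [← mul_div_assoc, ← exp_add]
    ring_nf
  simp only [this, Finset.prod_mul_distrib]
  ring

/-- The logarithmic derivative of the Gibbs density in the direction `v`. -/
lemma hasLineDerivAt_rho {V : ℝ → ℝ} (hV : Differentiable ℝ V) (β : ℝ) {w : Finset ℤ}
    (x v : Ew w) :
    HasLineDerivAt ℝ (rho V β w)
      ((∑ k, -β * (x.1 k * v.1 k + deriv V (x.2 k) * v.2 k)) * rho V β w x) x v := by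
  have e : ∀ y : Ew w, rho V β w y = exp (∑ k, -β * ((y.1 k) ^ 2 / 2 + V (y.2 k))) /
      ∏ _k : w, (Real.sqrt (2 * Real.pi / β) * ∫ r : ℝ, Real.exp (-β * V r)) := by
    intro y
    rw [rho, Finset.prod_div_distrib, exp_sum]
  have hS : HasDerivAt (fun t : ℝ => ∑ k, -β * (((x + t • v).1 k) ^ 2 / 2 + V ((x + t • v).2 k)))
      (∑ k, -β * (x.1 k * v.1 k + deriv V (x.2 k) * v.2 k)) 0 := by
    refine HasDerivAt.fun_sum fun k _ => HasDerivAt.const_mul _ ?_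
    have h1 : ∀ a b : ℝ, HasDerivAt (fun t : ℝ => a + t * b) b 0 := fun a b => by
      simpa using ((hasDerivAt_id (0 : ℝ)).mul_const b).const_add a
    have h2 := ((h1 (x.1 k) (v.1 k)).pow 2).div_const 2
    have h3 : HasDerivAt V (deriv V (x.2 k)) (x.2 k + 0 * v.2 k) := by
      simpa using (hV (x.2 k)).hasDerivAt
    have h4 := h3.comp (0 : ℝ) (h1 (x.2 k) (v.2 k))
    refine HasDerivAt.congr_deriv (f := fun t : ℝ => _) (h2.add h4) ?_
    push_cast; ring
  unfold HasLineDerivAt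
  simp only [e]
  refine (hS.exp.div_const _).congr_deriv ?_
  simp only [zero_smul, add_zero]
  ring

/-- The vector field `Yz V i j` is divergence free and annihilates the Gibbs density; hence its
integral against the density vanishes. -/
lemma integral_Yw_mul_rho {V : ℝ → ℝ} (hV : ContDiff ℝ (⊤ : ℕ∞) V)
    {δm δp β : ℝ} (hδm : 0 < δm) (hβ : 0 < β)
    (hV' : ∀ r, |deriv V r| ≤ δp * |r|) (hVq : ∀ r, δm / 2 * r ^ 2 ≤ V r)
    {w : Finset ℤ} (i j : w) {F : Ew w → ℝ} (hF : ContDiff ℝ 1 F)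
    (hb : ∃ C, ∀ x, |F x| ≤ C) (hb' : ∃ C, ∀ x, ‖fderiv ℝ F x‖ ≤ C) :
    Integrable (fun x => Yw V i j F x * rho V β w x) ∧ ∫ x, Yw V i j F x * rho V β w x = 0 := by
  have hV1 : Differentiable ℝ V := hV.differentiable (by simp)
  have hVc' : Continuous (deriv V) := (contDiff_infty_iff_deriv.1 hV).2.continuous
  have hρc := continuous_rho hV.continuous β w
  have hFc := hF.continuous
  have hFc' := hF.continuous_fderiv one_ne_zero
  have hW := integrable_weight hV.continuous hVc' hδm hβ hV' hVq i j
  obtain ⟨C, hC⟩ := hb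
  obtain ⟨D, hD⟩ := hb'
  have hD' : ∀ v x, |fderiv ℝ F x v| ≤ D * ‖v‖ := fun v x =>
    ((fderiv ℝ F x).le_opNorm v).trans (by gcongr; exact hD x)
  have : (volume : Measure (Ew w)).IsAddHaarMeasure :=
    Measure.prod.instIsAddHaarMeasure volume volume
  -- domination by the weight
  have dom : ∀ {a b : Ew w → ℝ} {M : ℝ}, Continuous a → Continuous b →
      (∀ x, |a x| ≤ (1 + |x.1 i|) * (1 + |deriv V (x.2 j)|)) → (∀ x, |b x| ≤ M) →
      Integrable fun x => a x * b x * rho V β w x := by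
    intro a b M ha hb hA hM
    refine (hW.const_mul M).mono' (by fun_prop) (.of_forall fun x => ?_)
    rw [norm_mul, Real.norm_of_nonneg (rho_nonneg V β w x), norm_mul, Real.norm_eq_abs,
      Real.norm_eq_abs, ← mul_assoc, mul_comm M]
    have := rho_nonneg V β w x
    gcongr
    · exact hA x
    · exact hM x
  have hp : ∀ x : Ew w, |x.1 i| ≤ (1 + |x.1 i|) * (1 + |deriv V (x.2 j)|) := fun x => by
    nlinarith [abs_nonneg (x.1 i), abs_nonneg (deriv V (x.2 j)),
      mul_nonneg (abs_nonneg (x.1 i)) (abs_nonneg (deriv V (x.2 j)))]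
  have hr : ∀ x : Ew w, |deriv V (x.2 j)| ≤ (1 + |x.1 i|) * (1 + |deriv V (x.2 j)|) := fun x => by
    nlinarith [abs_nonneg (x.1 i), abs_nonneg (deriv V (x.2 j)),
      mul_nonneg (abs_nonneg (x.1 i)) (abs_nonneg (deriv V (x.2 j)))]
  have hpr : ∀ x : Ew w, |x.1 i * deriv V (x.2 j)| ≤
      (1 + |x.1 i|) * (1 + |deriv V (x.2 j)|) := fun x => by
    rw [abs_mul]
    nlinarith [abs_nonneg (x.1 i), abs_nonneg (deriv V (x.2 j))]
  set ej : Ew w := (0, Pi.single j 1) with hej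
  set ei : Ew w := (Pi.single i 1, 0) with hei
  have I1 := dom (a := fun x => x.1 i) (b := fun x => fderiv ℝ F x ej) (by fun_prop) (by fun_prop)
    hp (hD' ej)
  have I2 := dom (a := fun x => deriv V (x.2 j)) (b := fun x => fderiv ℝ F x ei) (by fun_prop)
    (by fun_prop) hr (hD' ei)
  have I3 := dom (a := fun x => x.1 i) (by fun_prop) hFc hp hC
  have I4 := dom (a := fun x => deriv V (x.2 j)) (by fun_prop) hFc hr hC
  have I5 := (dom (a := fun x => x.1 i * deriv V (x.2 j)) (by fun_prop) hFc hpr hC).const_mul (-β)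
  have hsplit : (fun x => Yw V i j F x * rho V β w x) = fun x =>
      x.1 i * fderiv ℝ F x ej * rho V β w x -
        deriv V (x.2 j) * fderiv ℝ F x ei * rho V β w x := by
    funext x
    simp only [Yw]
    ring
  -- logarithmic derivatives of the density along the two coordinate directions
  have R1 : ∀ x, HasLineDerivAt ℝ (rho V β w) (-β * deriv V (x.2 j) * rho V β w x) x ej := by
    intro x
    convert hasLineDerivAt_rho hV1 β x ej using 1
    simp [hej, Pi.single_apply]
  have R2 : ∀ x, HasLineDerivAt ℝ (rho V β w) (-β * x.1 i * rho V β w x) x ei := by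
    intro x
    convert hasLineDerivAt_rho hV1 β x ei using 1
    simp [hei, Pi.single_apply]
  have L1 : ∀ x, HasLineDerivAt ℝ (fun x : Ew w => x.1 i * F x) (x.1 i * fderiv ℝ F x ej) x ej := by
    intro x
    have := ((hF.differentiable one_ne_zero x).hasFDerivAt.hasLineDerivAt ej)
    unfold HasLineDerivAt at this ⊢
    simpa [hej] using this.const_mul (x.1 i)
  have L2 : ∀ x, HasLineDerivAt ℝ (fun x : Ew w => deriv V (x.2 j) * F x)
      (deriv V (x.2 j) * fderiv ℝ F x ei) x ei := by
    intro x
    have := ((hF.differentiable one_ne_zero x).hasFDerivAt.hasLineDerivAt ei)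
    unfold HasLineDerivAt at this ⊢
    simpa [hei] using this.const_mul (deriv V (x.2 j))
  have P1 := integral_bilinear_hasLineDerivAt_right_eq_neg_left_of_integrable
    (μ := (volume : Measure (Ew w))) (B := ContinuousLinearMap.mul ℝ ℝ) (v := ej)
    (f := fun x : Ew w => x.1 i * F x) (f' := fun x => x.1 i * fderiv ℝ F x ej)
    (g := rho V β w) (g' := fun x => -β * deriv V (x.2 j) * rho V β w x)
    I1 (I5.congr (.of_forall fun x => by simp; ring)) I3 (fun x _ => L1 x) (fun x _ => R1 x)
  have P2 := integral_bilinear_hasLineDerivAt_right_eq_neg_left_of_integrable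
    (μ := (volume : Measure (Ew w))) (B := ContinuousLinearMap.mul ℝ ℝ) (v := ei)
    (f := fun x : Ew w => deriv V (x.2 j) * F x) (f' := fun x => deriv V (x.2 j) * fderiv ℝ F x ei)
    (g := rho V β w) (g' := fun x => -β * x.1 i * rho V β w x)
    I2 (I5.congr (.of_forall fun x => by simp; ring)) I4 (fun x _ => L2 x) (fun x _ => R2 x)
  simp only [ContinuousLinearMap.mul_apply'] at P1 P2
  rw [hsplit]
  refine ⟨I1.sub I2, ?_⟩
  rw [integral_sub I1 I2, sub_eq_zero, ← neg_inj, ← P1, ← P2]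
  congr 1
  funext x
  ring

/-! ### Integration against the Gibbs measure -/

lemma IsGibbs.integral_res {V : ℝ → ℝ} {β : ℝ} {ν : Measure Om} (hν : IsGibbs V β ν)
    (hV : Continuous V) {w : Finset ℤ} {F : Ew w → ℝ} (hF : Measurable F) :
    ∫ ω, F (res w ω) ∂ν = ∫ x, F x * rho V β w x := by
  have hm : Measure.map (res w) ν =
      volume.withDensity (fun x => ENNReal.ofReal (rho V β w x)) := hν w
  rw [← integral_map (continuous_res w).measurable.aemeasurable hF.aestronglyMeasurable, hm,
    integral_withDensity_eq_integral_toReal_smul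
      (continuous_rho hV β w).measurable.ennreal_ofReal (by simp)]
  simp only [ENNReal.toReal_ofReal (rho_nonneg V β w _), smul_eq_mul, mul_comm]

lemma IsGibbs.integrable_res {V : ℝ → ℝ} {β : ℝ} {ν : Measure Om} (hν : IsGibbs V β ν)
    (hV : Continuous V) {w : Finset ℤ} {F : Ew w → ℝ}
    (hi : Integrable fun x => F x * rho V β w x) :
    Integrable (fun ω => F (res w ω)) ν := by
  have hm : Measure.map (res w) ν =
      volume.withDensity (fun x => ENNReal.ofReal (rho V β w x)) := hν w
  refine Integrable.comp_measurable (g := F) ?_ (continuous_res w).measurable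
  rw [hm, integrable_withDensity_iff (continuous_rho hV β w).measurable.ennreal_ofReal (by simp)]
  simpa only [ENNReal.toReal_ofReal (rho_nonneg V β w _)] using hi

/-- Translation invariance of the Gibbs measure, on local functions. -/
lemma IsGibbs.integral_tauf {V : ℝ → ℝ} {β : ℝ} {ν : Measure Om} (hν : IsGibbs V β ν)
    (hV : Continuous V) {w : Finset ℤ} {f : Om → ℝ} (hm : Measurable f) (hf : LocalOn w f)
    (j : ℤ) : ∫ ω, tauf j f ω ∂ν = ∫ ω, f ω ∂ν := by
  have hpm : Measurable fun x : Ew w => patch w x 0 := by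
    refine Measurable.prodMk (measurable_pi_lambda _ fun i => ?_)
      (measurable_pi_lambda _ fun i => ?_)
    all_goals
      by_cases hi : i ∈ w
      · simp only [hi, dif_pos]; fun_prop
      · simp only [hi, dif_neg, not_false_iff]; fun_prop
  set F : Ew w → ℝ := fun x => f (patch w x 0) with hFdef
  have hF : Measurable F := hm.comp hpm
  have hfF : ∀ ω, f ω = F (res w ω) := fun ω =>
    hf _ _ (res_eq_iff.2 (by constructor <;> intro i hi <;> simp [patch, res, hi]))
  let w' : Finset ℤ := w.map (addRightEmbedding j)
  let e : w ≃ w' :=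
    { toFun := fun k => ⟨k + j, by simp [w']⟩
      invFun := fun k => ⟨k - j, by
        obtain ⟨k, hk⟩ := k
        obtain ⟨a, ha, rfl⟩ := Finset.mem_map.1 hk
        simpa using ha⟩
      left_inv := fun k => by simp
      right_inv := fun k => by simp }
  let E : (w' → ℝ) ≃ᵐ (w → ℝ) := MeasurableEquiv.piCongrLeft (fun _ => ℝ) e.symm
  have hE : ∀ y : w' → ℝ, E y = y ∘ e := by
    intro y
    funext k
    have := Equiv.piCongrLeft_apply_apply (fun _ : w => ℝ) e.symm y (e k)
    rw [Equiv.symm_apply_apply] at this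
    exact this
  have hEm : MeasurePreserving E volume volume :=
    volume_measurePreserving_piCongrLeft (fun _ : w => ℝ) e.symm
  let R : Ew w' ≃ᵐ Ew w := E.prodCongr E
  have hR : MeasurePreserving R volume volume := hEm.prod hEm
  have hres : ∀ ω, res w (shiftc j ω) = R (res w' ω) := by
    intro ω
    refine Prod.ext ?_ ?_
    · exact (hE (res w' ω).1).symm
    · exact (hE (res w' ω).2).symm
  have hrho : ∀ x, rho V β w (R x) = rho V β w' x := by
    intro x
    have h1 : (R x).1 = x.1 ∘ e := hE _
    have h2 : (R x).2 = x.2 ∘ e := hE _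
    simp only [rho, h1, h2, Function.comp]
    exact e.prod_comp (fun i : w' => exp (-β * ((x.1 i) ^ 2 / 2 + V (x.2 i))) /
      (√(2 * π / β) * ∫ r : ℝ, exp (-β * V r)))
  calc ∫ ω, tauf j f ω ∂ν = ∫ ω, (F ∘ R) (res w' ω) ∂ν := by
        simp only [tauf, hfF, hres, Function.comp]
    _ = ∫ x, (F ∘ R) x * rho V β w' x := hν.integral_res hV (hF.comp R.measurable)
    _ = ∫ x, (fun y => F y * rho V β w y) (R x) := by simp only [hrho, Function.comp]
    _ = ∫ y, F y * rho V β w y := hR.integral_comp' (fun y => F y * rho V β w y)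
    _ = ∫ ω, F (res w ω) ∂ν := (hν.integral_res hV hF).symm
    _ = ∫ ω, f ω ∂ν := by simp only [hfF]

/-- Antisymmetry of a single vector field `Y_{i,j}` in `L²(ν_β)`, with the integrability that
makes the integrals meaningful. -/
lemma IsGibbs.Yz_antisymm {V : ℝ → ℝ} (hV : ContDiff ℝ (⊤ : ℕ∞) V)
    {δm δp β : ℝ} (hδm : 0 < δm) (hβ : 0 < β)
    (hV' : ∀ r, |deriv V r| ≤ δp * |r|) (hVq : ∀ r, δm / 2 * r ^ 2 ≤ V r)
    {ν : Measure Om} (hν : IsGibbs V β ν) {s t : Finset ℤ} {f k : Om → ℝ}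
    (hf : NiceOn s f) (hk : NiceOn t k) (i j : ℤ) :
    Integrable (fun ω => k ω * Yz V i j f ω) ν ∧
    ∫ ω, k ω * Yz V i j f ω ∂ν = -∫ ω, f ω * Yz V i j k ω ∂ν := by
  let w := s ∪ t ∪ {i, j}
  have hVc' : Continuous (deriv V) := (contDiff_infty_iff_deriv.1 hV).2.continuous
  have hsw : s ⊆ w := fun a ha => by simp [w, ha]
  have htw : t ⊆ w := fun a ha => by simp [w, ha]
  let i' : w := ⟨i, by simp [w]⟩
  let j' : w := ⟨j, by simp [w]⟩
  have main : ∀ F : Ew w → ℝ, ContDiff ℝ 1 F → (∃ C, ∀ x, |F x| ≤ C) →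
      (∃ C, ∀ x, ‖fderiv ℝ F x‖ ≤ C) → Integrable (fun ω => Yw V i' j' F (res w ω)) ν ∧
      ∫ ω, Yw V i' j' F (res w ω) ∂ν = 0 := by
    intro F hF hb hb'
    have hm := (continuous_Yw hVc' i' j' hF).measurable
    have := integral_Yw_mul_rho hV hδm hβ hV' hVq i' j' hF hb hb'
    exact ⟨hν.integrable_res hV.continuous this.1,
      (hν.integral_res hV.continuous hm).trans this.2⟩
  have int : ∀ {F G : Ew w → ℝ}, ContDiff ℝ 1 F → (∃ C, ∀ x, |F x| ≤ C) →
      (∃ C, ∀ x, ‖fderiv ℝ F x‖ ≤ C) → Continuous G → (∃ C, ∀ x, |G x| ≤ C) →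
      Integrable (fun ω => G (res w ω) * Yw V i' j' F (res w ω)) ν := by
    rintro F G hF hb hb' hG ⟨C, hC⟩
    exact (main F hF hb hb').1.bdd_mul (c := C)
      (hG.comp (continuous_res w)).aestronglyMeasurable (.of_forall fun ω => hC _)
  obtain ⟨F, hF, hFb, hFb', hfF⟩ := hf.mono hsw
  obtain ⟨G, hG, hGb, hGb', hkG⟩ := hk.mono htw
  have hYf : ∀ ω, Yz V i j f ω = Yw V i' j' F (res w ω) := Yz_eq hF hfF V i' j'
  have hYk : ∀ ω, Yz V i j k ω = Yw V i' j' G (res w ω) := Yz_eq hG hkG V i' j'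
  have hfd : ∀ x, fderiv ℝ (fun x => F x * G x) x = F x • fderiv ℝ G x + G x • fderiv ℝ F x :=
    fun x => fderiv_fun_mul (hF.differentiable one_ne_zero x) (hG.differentiable one_ne_zero x)
  -- Leibniz rule
  have hprod : ∀ x, Yw V i' j' (fun x => F x * G x) x =
      G x * Yw V i' j' F x + F x * Yw V i' j' G x := by
    intro x
    simp only [Yw, hfd, add_apply, smul_apply, smul_eq_mul]
    ring
  have IF := int hF hFb hFb' hG.continuous hGb
  have IG := int hG hGb hGb' hF.continuous hFb
  have hz : ∫ ω, Yw V i' j' (fun x => F x * G x) (res w ω) ∂ν = 0 := by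
    obtain ⟨A, hA⟩ := hFb
    obtain ⟨B, hB⟩ := hGb
    obtain ⟨A', hA'⟩ := hFb'
    obtain ⟨B', hB'⟩ := hGb'
    refine (main _ (hF.mul hG) ⟨A * B, fun x => ?_⟩ ⟨A * B' + B * A', fun x => ?_⟩).2
    · have := (abs_nonneg _).trans (hA x)
      rw [abs_mul]
      exact mul_le_mul (hA x) (hB x) (abs_nonneg _) this
    · have h1 := (abs_nonneg _).trans (hA x)
      have h2 := (abs_nonneg _).trans (hB x)
      rw [hfd]
      refine (norm_add_le _ _).trans (add_le_add ?_ ?_)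
      · rw [norm_smul]
        exact mul_le_mul (hA x) (hB' x) (norm_nonneg _) h1
      · rw [norm_smul]
        exact mul_le_mul (hB x) (hA' x) (norm_nonneg _) h2
  simp only [hprod] at hz
  rw [integral_add IF IG] at hz
  simp only [hYf, hYk, hfF, hkG]
  exact ⟨IF, eq_neg_of_add_eq_zero_left hz⟩

/-- Antisymmetry of `A` in `L²(ν_β)` on nice local functions. If no bond meets both windows,
then both sides vanish: in each term one of the two functions is constant along the vector
field. -/
lemma IsGibbs.Aop_antisymm {V : ℝ → ℝ} (hV : ContDiff ℝ (⊤ : ℕ∞) V)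
    {δm δp β : ℝ} (hδm : 0 < δm) (hβ : 0 < β)
    (hV' : ∀ r, |deriv V r| ≤ δp * |r|) (hVq : ∀ r, δm / 2 * r ^ 2 ≤ V r)
    {ν : Measure Om} (hν : IsGibbs V β ν) {s t : Finset ℤ} {f k : Om → ℝ}
    (hf : NiceOn s f) (hk : NiceOn t k) :
    ∫ ω, k ω * Aop V f ω ∂ν = -∫ ω, f ω * Aop V k ω ∂ν ∧
    ((∀ a ∈ s, ∀ b ∈ t, 1 < |a - b|) → ∫ ω, k ω * Aop V f ω ∂ν = 0) := by
  let K : Finset ℤ := (s ∪ t) ∪ (s ∪ t).map (addRightEmbedding (-1))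
  have hK : ∀ i, i ∉ K → (i ∉ s ∧ i ∉ t) ∧ i + 1 ∉ s ∧ i + 1 ∉ t := by
    intro i hi
    simp only [K, Finset.mem_union, Finset.mem_map, addRightEmbedding_apply, not_or,
      not_exists, not_and] at hi
    refine ⟨hi.1, fun h => hi.2 (i + 1) (Or.inl h) (by ring), fun h => hi.2 (i + 1) (Or.inr h)
      (by ring)⟩
  have expand : ∀ {s t : Finset ℤ} {f k : Om → ℝ}, NiceOn s f → NiceOn t k →
      (∀ i, i ∉ K → i ∉ s ∧ i + 1 ∉ s) → ∫ ω, k ω * Aop V f ω ∂ν =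
        ∑ i ∈ K, (∫ ω, k ω * Yz V i i f ω ∂ν - ∫ ω, k ω * Yz V i (i + 1) f ω ∂ν) := by
    intro s t f k hf hk hK
    have hI := fun i j => (hν.Yz_antisymm hV hδm hβ hV' hVq hf hk i j).1
    simp only [hf.localOn.Aop_eq_sum V hK, Finset.mul_sum, mul_sub]
    refine (integral_finsetSum _ fun i _ => (hI i i).sub (hI i (i + 1))).trans ?_
    exact Finset.sum_congr rfl fun i _ => integral_sub (hI i i) (hI i (i + 1))
  have hanti := fun i j => (hν.Yz_antisymm hV hδm hβ hV' hVq hf hk i j).2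
  constructor
  · rw [expand hf hk fun i hi => ⟨(hK i hi).1.1, (hK i hi).2.1⟩,
      expand hk hf fun i hi => ⟨(hK i hi).1.2, (hK i hi).2.2⟩, ← Finset.sum_neg_distrib]
    refine Finset.sum_congr rfl fun i _ => ?_
    rw [hanti, hanti]
    ring
  · intro hst
    rw [expand hf hk fun i hi => ⟨(hK i hi).1.1, (hK i hi).2.1⟩]
    have hz : ∀ i j : ℤ, |i - j| ≤ 1 → ∫ ω, k ω * Yz V i j f ω ∂ν = 0 := by
      intro i j hij
      by_cases h : i ∉ s ∧ j ∉ s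
      · simp [hf.localOn.Yz_eq_zero V h.1 h.2]
      · have h1 : i ∉ t ∧ j ∉ t := by
          by_contra h'
          have key : ∃ a ∈ s, ∃ b ∈ t, |a - b| ≤ 1 := by
            have hji : |j - i| ≤ 1 := abs_sub_comm i j ▸ hij
            by_cases his : i ∈ s <;> by_cases hjs : j ∈ s <;> by_cases hit : i ∈ t <;>
              by_cases hjt : j ∈ t <;> simp only [his, hjs, hit, hjt, not_true, not_false_iff,
                and_self, and_true, true_and] at h h' <;>
              first
              | exact ⟨i, his, i, hit, by simp⟩
              | exact ⟨j, hjs, j, hjt, by simp⟩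
              | exact ⟨i, his, j, hjt, hij⟩
              | exact ⟨j, hjs, i, hit, hji⟩
          obtain ⟨a, ha, b, hb, hab⟩ := key
          exact absurd (hst a ha b hb) (not_lt.2 hab)
        rw [hanti]
        simp [hk.localOn.Yz_eq_zero V h1.1 h1.2]
    refine Finset.sum_eq_zero fun i _ => ?_
    rw [hz i i (by simp), hz i (i + 1) (by simp), sub_zero]

/-- The Liouville operator `A` is antisymmetric with respect to the space–time
inner product `Σ_i ⟨·, τ_i ·⟩`: for `g, h ∈ C`,
`Σ_i ∫ (τ_i g)(A h) dν_β = − Σ_i ∫ (A g)(τ_i h) dν_β`, both sums having only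
finitely many nonvanishing terms. -/
theorem liouville_antisymmetric_space_time
    (V : ℝ → ℝ) (hV : ContDiff ℝ (⊤ : ℕ∞) V) (hV0 : V 0 = 0) (hdV0 : deriv V 0 = 0)
    (δm δp : ℝ) (hδm : 0 < δm) (hδmp : δm ≤ δp)
    (hVpp : ∀ r : ℝ, δm ≤ deriv (deriv V) r ∧ deriv (deriv V) r ≤ δp)
    (β : ℝ) (hβ : 0 < β) (ν : Measure Om) (hν : IsGibbs V β ν)
    (g h : Om → ℝ) (hg : IsCyl ν g) (hh : IsCyl ν h) :
    (Function.support fun i : ℤ => ∫ ω, tauf i g ω * Aop V h ω ∂ν).Finite ∧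
    (Function.support fun i : ℤ => ∫ ω, Aop V g ω * tauf i h ω ∂ν).Finite ∧
    ∑ᶠ i : ℤ, ∫ ω, tauf i g ω * Aop V h ω ∂ν =
      -∑ᶠ i : ℤ, ∫ ω, Aop V g ω * tauf i h ω ∂ν := by
  obtain ⟨s, hg⟩ := hg.niceOn
  obtain ⟨t, hh⟩ := hh.niceOn
  obtain ⟨hV', hVq⟩ := potential_bounds hV hV0 hdV0 hδm hVpp
  have hVc' : Continuous (deriv V) := (contDiff_infty_iff_deriv.1 hV).2.continuous
  have hanti := fun i => hν.Aop_antisymm hV hδm hβ hV' hVq hh (hg.tauf i)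
  -- finiteness of both supports, by disjointness of the windows
  have hfin : ∀ {s t : Finset ℤ} {f k : Om → ℝ}, NiceOn s f → NiceOn t k →
      (Function.support fun i : ℤ => ∫ ω, tauf i k ω * Aop V f ω ∂ν).Finite := by
    intro s t f k hf hk
    refine ((s ×ˢ t ×ˢ Finset.Icc (-1 : ℤ) 1).image fun p => p.1 - p.2.1 + p.2.2).finite_toSet.subset
      fun i hi => ?_
    by_contra hmem
    refine hi ((hν.Aop_antisymm hV hδm hβ hV' hVq hf (hk.tauf i)).2 fun a ha b hb => ?_)
    obtain ⟨b, hb', rfl⟩ := Finset.mem_map.1 hb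
    by_contra hle
    refine hmem ?_
    rw [not_lt, addRightEmbedding_apply, abs_le] at hle
    simp only [Finset.coe_image, Set.mem_image, Finset.mem_coe, Finset.mem_product,
      Finset.mem_Icc, Prod.exists]
    exact ⟨a, b, i - a + b, ⟨ha, hb', by omega, by omega⟩, by ring⟩
  have h1 := hfin hh hg
  have h2 : (Function.support fun i : ℤ => ∫ ω, Aop V g ω * tauf i h ω ∂ν).Finite := by
    simpa only [mul_comm] using hfin hg hh
  refine ⟨h1, h2, ?_⟩
  -- move `A` onto `τ_i g`, then shift the whole integrand by `-i`
  have hterm : ∀ i : ℤ, ∫ ω, tauf i g ω * Aop V h ω ∂ν =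
      -∫ ω, Aop V g ω * tauf (-i) h ω ∂ν := by
    intro i
    rw [(hanti i).1, neg_inj, Aop_tauf]
    let K : Finset ℤ := s ∪ s.map (addRightEmbedding (-1))
    have hK : ∀ i, i ∉ K → i ∉ s ∧ i + 1 ∉ s := by
      intro i hi
      simp only [K, Finset.mem_union, Finset.mem_map, addRightEmbedding_apply, not_or,
        not_exists, not_and] at hi
      exact ⟨hi.1, fun h => hi.2 (i + 1) h (by ring)⟩
    let w := (s ∪ K ∪ K.map (addRightEmbedding 1)) ∪ t.map (addRightEmbedding (-i))
    have hgw : NiceOn w g := hg.mono fun a ha => by simp [w, ha]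
    have hhw : NiceOn w (tauf (-i) h) := (hh.tauf (-i)).mono fun a ha => by
      simp only [w, Finset.mem_union]; exact Or.inr ha
    have hA := hg.localOn.Aop_eq_sum V hK
    have hAm : Measurable (Aop V g) := by
      rw [funext hA]
      exact (continuous_finsetSum _ fun m _ =>
        (hg.continuous_Yz hVc' m m).sub (hg.continuous_Yz hVc' m (m + 1))).measurable
    have hAl : LocalOn w (Aop V g) := by
      intro ω ω' e
      rw [hA, hA]
      refine Finset.sum_congr rfl fun m hm => ?_
      have hm0 : m ∈ w := by simp [w, hm]
      have hm1 : m + 1 ∈ w := by simp [w, hm]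
      rw [hgw.localOn_Yz V hm0 hm0 _ _ e, hgw.localOn_Yz V hm0 hm1 _ _ e]
    rw [← hν.integral_tauf hV.continuous
      (f := fun ω => Aop V g ω * tauf (-i) h ω) (hAm.mul hhw.continuous.measurable)
      (w := w) (fun ω ω' e => by
        simp only
        rw [hAl _ _ e, hhw.localOn _ _ e]) i]
    congr 1
    funext ω
    have : shiftc (-i) (shiftc i ω) = ω := by simp [shiftc]
    simp only [tauf, this]
    ring
  rw [finsum_congr hterm, finsum_neg_distrib, neg_inj]
  exact finsum_comp_equiv (Equiv.neg ℤ) (f := fun i => ∫ ω, Aop V g ω * tauf i h ω ∂ν)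
end

section
/- Uniform weighted Poincaré inequality on the circle: there exists a constant C > 0 depending only on d₋ and d₊ (one may take C = d₊²) such that for every measurable function q : [0,2π] → ℝ with d₋ ≤ q(θ) ≤ d₊ for all θ, and every 2π-periodic continuously differentiable function f : ℝ → ℝ, one has ∫₀^{2π} (f(θ) − m_q)² q(θ) dθ ≤ C ∫₀^{2π} f'(θ)² q(θ)^{−1} dθ, where m_q = (∫₀^{2π} f(θ) q(θ) dθ)/(∫₀^{2π} q(θ) dθ). -/
/-!
Replacing the weighted mean by any other constant `c` can only increase the left-hand side
(`integral_sub_weighted_mean_sq_le`), so it suffices to find one constant `c` with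
`∫ (f - c)² ≤ ∫ (f')²` over a period: the bounds `q ≤ d₊` and `1 ≤ d₊ q⁻¹` then supply the two
factors `d₊`.

To find `c`, note that `x ↦ f (x + π) - f x` changes sign on `[0, π]`, so `f a = f (a + π)` for
some `a`; take `c = f a`. Then `f - c` vanishes at both ends of the half periods `[a, a + π]` and
`[a + π, a + 2π]`, and on each of them the Dirichlet form of Wirtinger's inequality applies
(`wirtinger_dirichlet`). Its proof integrates
`((f - c)² cot (x - a))' = (f')² - (f - c)² - (f' - (f - c) cot (x - a))²`,
the function on the left being continuous up to the endpoints, with value `0` there.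
-/

open MeasureTheory Real

/-- The double zero of `(f - f a)²` beats the simple pole of the cotangent. The value at `a` is `0`,
both because of the factor `f a - f a` and because of the convention `1 / 0 = 0`. -/
lemma continuousAt_sq_mul_cot {f : ℝ → ℝ} (hf : Differentiable ℝ f) (a : ℝ) :
    ContinuousAt (fun x => (f x - f a) ^ 2 * (cos (x - a) / sin (x - a))) a := by
  have key : (fun x => (f x - f a) ^ 2 * (cos (x - a) / sin (x - a))) =
      fun x => (f x - f a) * dslope f a x * (cos (x - a) / sinc (x - a)) := by
    funext x
    rcases eq_or_ne x a with rfl | hx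
    · simp
    have hxa : x - a ≠ 0 := sub_ne_zero.2 hx
    rw [dslope_of_ne _ hx, slope_def_field, sinc_of_ne_zero hxa]
    by_cases hs : sin (x - a) = 0
    · simp [hs]
    · field_simp
  rw [key]
  have h1 : ContinuousAt (dslope f a) a := continuousAt_dslope_same.2 (hf a)
  have h2 : ContinuousAt f a := (hf a).continuousAt
  have h3 : ContinuousAt (fun x => sinc (x - a)) a :=
    (continuous_sinc.comp (continuous_id.sub continuous_const)).continuousAt
  refine ((h2.sub continuousAt_const).mul h1).mul (ContinuousAt.div (by fun_prop) h3 ?_)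
  simp

/-- Wirtinger's inequality for a function minus its common value at the ends of an interval of
length `π`. -/
lemma wirtinger_dirichlet {f : ℝ → ℝ} (hf : ContDiff ℝ 1 f) (a : ℝ) (hab : f (a + π) = f a) :
    ∫ x in a..(a + π), (f x - f a) ^ 2 ≤ ∫ x in a..(a + π), (deriv f x) ^ 2 := by
  have hd : Differentiable ℝ f := hf.differentiable one_ne_zero
  have hc : Continuous f := hf.continuous
  have hdc : Continuous (deriv f) := hf.continuous_deriv le_rfl
  have hsin : ∀ x ∈ Set.Ioo a (a + π), sin (x - a) ≠ 0 := fun x hx =>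
    (sin_pos_of_pos_of_lt_pi (by linarith [hx.1]) (by linarith [hx.2])).ne'
  have hder : ∀ x ∈ Set.Ioo a (a + π),
      HasDerivAt (fun x => (f x - f a) ^ 2 * (cos (x - a) / sin (x - a)))
        ((deriv f x) ^ 2 - (f x - f a) ^ 2 -
          (deriv f x - (f x - f a) * (cos (x - a) / sin (x - a))) ^ 2) x := by
    intro x hx
    have hs := hsin x hx
    have e1 : HasDerivAt (fun x => (f x - f a) ^ 2) (2 * (f x - f a) * deriv f x) x := by
      simpa using ((hd x).hasDerivAt.sub_const (f a)).fun_pow 2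
    have e0 : HasDerivAt (fun x => x - a) 1 x := (hasDerivAt_id x).sub_const a
    have ec : HasDerivAt (fun x => cos (x - a)) (-sin (x - a)) x := by simpa using e0.cos
    have es : HasDerivAt (fun x => sin (x - a)) (cos (x - a)) x := by simpa using e0.sin
    refine (e1.fun_mul (ec.fun_div es hs)).congr_deriv ?_
    field_simp
    ring
  have hcont : ContinuousOn (fun x => (f x - f a) ^ 2 * (cos (x - a) / sin (x - a)))
      (Set.Icc a (a + π)) := by
    intro x hx
    apply ContinuousAt.continuousWithinAt
    rcases eq_or_lt_of_le hx.1 with rfl | h1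
    · exact continuousAt_sq_mul_cot hd _
    rcases eq_or_lt_of_le hx.2 with rfl | h2
    · -- the cotangent has period `π`, so the right endpoint is another instance of the left one
      have := continuousAt_sq_mul_cot hd (a + π)
      simpa only [hab, ← sub_sub, cos_sub_pi, sin_sub_pi, neg_div_neg_eq] using this
    · exact (hder x ⟨h1, h2⟩).continuousAt
  have hint : Continuous fun x => (deriv f x) ^ 2 - (f x - f a) ^ 2 := by fun_prop
  have h := intervalIntegral.sub_le_integral_of_hasDeriv_right_of_le
    (by linarith [pi_pos] : a ≤ a + π) hcont
    (fun x hx => (hder x hx).hasDerivWithinAt)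
    (φ := fun x => (deriv f x) ^ 2 - (f x - f a) ^ 2)
    hint.continuousOn.integrableOn_Icc
    (fun x _ => sub_le_self _ (sq_nonneg _))
  rw [intervalIntegral.integral_sub (Continuous.intervalIntegrable (by fun_prop) _ _)
    (Continuous.intervalIntegrable (by fun_prop) _ _)] at h
  simp only [hab, sub_self] at h
  linarith

/-- Wirtinger's inequality on the circle, for a suitable constant in place of the mean. -/
lemma exists_wirtinger_const {f : ℝ → ℝ} (hf : ContDiff ℝ 1 f)
    (hp : Function.Periodic f (2 * π)) :
    ∃ c : ℝ, ∫ x in (0 : ℝ)..(2 * π), (f x - c) ^ 2 ≤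
      ∫ x in (0 : ℝ)..(2 * π), (deriv f x) ^ 2 := by
  have hc : Continuous f := hf.continuous
  have hdc : Continuous (deriv f) := hf.continuous_deriv le_rfl
  obtain ⟨a, ha⟩ : ∃ a, f (a + π) = f a := by
    have h2 : f (π + π) = f 0 := by
      have := hp 0
      rwa [zero_add, two_mul] at this
    have hh : Continuous fun x => f (x + π) - f x := by fun_prop
    have hmem : (0 : ℝ) ∈ Set.uIcc (f (0 + π) - f 0) (f (π + π) - f π) := by
      rw [h2, zero_add, Set.mem_uIcc]
      rcases le_total (f π) (f 0) with h | h
      · left; constructor <;> linarith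
      · right; constructor <;> linarith
    obtain ⟨a, -, ha⟩ := intermediate_value_uIcc (a := 0) (b := π) hh.continuousOn hmem
    exact ⟨a, sub_eq_zero.1 ha⟩
  have hb : f (a + π + π) = f (a + π) := by
    rw [ha, add_assoc, ← two_mul, hp]
  refine ⟨f a, ?_⟩
  have hdp : Function.Periodic (deriv f) (2 * π) := by
    intro x
    rw [← deriv_comp_add_const, show (fun x => f (x + 2 * π)) = f from funext hp]
  have p1 : Function.Periodic (fun x => (f x - f a) ^ 2) (2 * π) := fun x => by simp only [hp x]
  have p2 : Function.Periodic (fun x => deriv f x ^ 2) (2 * π) := fun x => by simp only [hdp x]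
  have s1 := p1.intervalIntegral_add_eq 0 a
  have s2 := p2.intervalIntegral_add_eq 0 a
  rw [zero_add] at s1 s2
  have i1 : Continuous fun x => (f x - f a) ^ 2 := by fun_prop
  have i2 : Continuous fun x => deriv f x ^ 2 := by fun_prop
  have w1 := wirtinger_dirichlet hf a ha
  have w2 := wirtinger_dirichlet hf (a + π) hb
  rw [ha] at w2
  rw [s1, s2, show a + 2 * π = a + π + π by ring,
    ← intervalIntegral.integral_add_adjacent_intervals (i1.intervalIntegrable a (a + π))
      (i1.intervalIntegrable _ _),
    ← intervalIntegral.integral_add_adjacent_intervals (i2.intervalIntegrable a (a + π))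
      (i2.intervalIntegrable _ _)]
  linarith

/-- The weighted mean minimizes the weighted mean square deviation. -/
lemma integral_sub_weighted_mean_sq_le {f q : ℝ → ℝ} {s t : ℝ} (hf : Continuous f)
    (hq : IntervalIntegrable q volume s t) (hQ : 0 < ∫ x in s..t, q x) (c : ℝ) :
    ∫ x in s..t, (f x - (∫ y in s..t, f y * q y) / (∫ y in s..t, q y)) ^ 2 * q x ≤
      ∫ x in s..t, (f x - c) ^ 2 * q x := by
  set Q := ∫ y in s..t, q y
  set F := ∫ y in s..t, f y * q y with hF
  set m := F / Q with hm
  have hi : ∀ g : ℝ → ℝ, Continuous g → IntervalIntegrable (fun x => g x * q x) volume s t :=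
    fun g hg => hq.continuousOn_mul hg.continuousOn
  have hmQ : m * Q = F := div_mul_cancel₀ _ hQ.ne'
  have e : ∫ x in s..t, (f x - c) ^ 2 * q x =
      (∫ x in s..t, (f x - m) ^ 2 * q x) + (2 * (m - c) * (F - m * Q) + (m - c) ^ 2 * Q) := by
    have : (fun x => (f x - c) ^ 2 * q x) = fun x => (f x - m) ^ 2 * q x +
        (2 * (m - c) * (f x * q x - m * q x) + (m - c) ^ 2 * q x) := by
      funext x; ring
    have hfq := hi f hf
    rw [this, intervalIntegral.integral_add (hi (fun x => (f x - m) ^ 2) (by fun_prop))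
        (((hfq.sub (hq.const_mul m)).const_mul _).add (hq.const_mul _)),
      intervalIntegral.integral_add ((hfq.sub (hq.const_mul m)).const_mul _) (hq.const_mul _),
      intervalIntegral.integral_const_mul, intervalIntegral.integral_const_mul,
      intervalIntegral.integral_sub hfq (hq.const_mul m), intervalIntegral.integral_const_mul]
  rw [e, hmQ, sub_self, mul_zero, zero_add]
  have : 0 ≤ (m - c) ^ 2 * Q := by positivity
  linarith

lemma intervalIntegrable_of_bounded {g : ℝ → ℝ} {s t B : ℝ} (hst : s ≤ t) (hg : Measurable g)
    (hB : ∀ x ∈ Set.Icc s t, |g x| ≤ B) : IntervalIntegrable g volume s t := by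
  refine (intervalIntegrable_const (c := B)).mono_fun hg.aestronglyMeasurable ?_
  filter_upwards [ae_restrict_mem measurableSet_uIoc] with x hx
  rw [Set.uIoc_of_le hst] at hx
  exact (hB x (Set.Ioc_subset_Icc_self hx)).trans (le_abs_self B)

/-- Uniform weighted Poincaré inequality on the circle: there is a constant
`C > 0` depending only on `d₋, d₊` (one may take `C = d₊²`) such that for every
measurable weight `q` with `d₋ ≤ q ≤ d₊` on `[0, 2π]` and every `2π`-periodic
`C¹` function `f`,
`∫₀^{2π} (f − m_q)² q ≤ C ∫₀^{2π} (f')² q⁻¹`, where `m_q = (∫ f q)/(∫ q)`. -/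
theorem weighted_poincare_circle
    (dm dp : ℝ) (hdm : 0 < dm) (hdmp : dm ≤ dp) :
    ∃ C : ℝ, 0 < C ∧ C = dp ^ 2 ∧
      ∀ q : ℝ → ℝ, Measurable q →
        (∀ θ ∈ Set.Icc (0 : ℝ) (2 * π), dm ≤ q θ ∧ q θ ≤ dp) →
        ∀ f : ℝ → ℝ, ContDiff ℝ 1 f → Function.Periodic f (2 * π) →
          ∫ θ in (0 : ℝ)..(2 * π),
              (f θ - (∫ θ' in (0 : ℝ)..(2 * π), f θ' * q θ') /
                (∫ θ' in (0 : ℝ)..(2 * π), q θ')) ^ 2 * q θ ≤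
            C * ∫ θ in (0 : ℝ)..(2 * π), (deriv f θ) ^ 2 * (q θ)⁻¹ := by
  have hdp : 0 < dp := hdm.trans_le hdmp
  refine ⟨dp ^ 2, by positivity, rfl, fun q hqm hq f hf hp => ?_⟩
  have hc : Continuous f := hf.continuous
  have hdc : Continuous (deriv f) := hf.continuous_deriv le_rfl
  have hpi : (0 : ℝ) < 2 * π := two_pi_pos
  have hqpos : ∀ x ∈ Set.Icc (0 : ℝ) (2 * π), 0 < q x := fun x hx => hdm.trans_le (hq x hx).1
  have iq : IntervalIntegrable q volume 0 (2 * π) :=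
    intervalIntegrable_of_bounded hpi.le hqm
      (fun x hx => by rw [abs_of_pos (hqpos x hx)]; exact (hq x hx).2)
  have iq' : IntervalIntegrable (fun x => (q x)⁻¹) volume 0 (2 * π) :=
    intervalIntegrable_of_bounded (B := dm⁻¹) hpi.le hqm.inv
      (fun x hx => by
        rw [abs_of_pos (inv_pos.2 (hqpos x hx))]
        exact inv_anti₀ hdm (hq x hx).1)
  have hQ : 0 < ∫ x in (0 : ℝ)..(2 * π), q x :=
    intervalIntegral.intervalIntegral_pos_of_pos_on iq
      (fun x hx => hqpos x (Set.Ioo_subset_Icc_self hx)) hpi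
  obtain ⟨c, hw⟩ := exists_wirtinger_const hf hp
  have i1 : Continuous fun x => (f x - c) ^ 2 := by fun_prop
  have i2 : Continuous fun x => deriv f x ^ 2 := by fun_prop
  calc _ ≤ ∫ x in (0 : ℝ)..(2 * π), (f x - c) ^ 2 * q x :=
        integral_sub_weighted_mean_sq_le hc iq hQ c
    _ ≤ ∫ x in (0 : ℝ)..(2 * π), dp * (f x - c) ^ 2 := by
        refine intervalIntegral.integral_mono_on hpi.le (iq.continuousOn_mul i1.continuousOn)
          ((i1.intervalIntegrable _ _).const_mul dp) fun x hx => ?_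
        rw [mul_comm]
        exact mul_le_mul_of_nonneg_right (hq x hx).2 (sq_nonneg _)
    _ = dp * ∫ x in (0 : ℝ)..(2 * π), (f x - c) ^ 2 := intervalIntegral.integral_const_mul _ _
    _ ≤ dp * ∫ x in (0 : ℝ)..(2 * π), deriv f x ^ 2 := mul_le_mul_of_nonneg_left hw hdp.le
    _ ≤ dp * ∫ x in (0 : ℝ)..(2 * π), dp * (deriv f x ^ 2 * (q x)⁻¹) := by
        refine mul_le_mul_of_nonneg_left ?_ hdp.le
        refine intervalIntegral.integral_mono_on hpi.le (i2.intervalIntegrable _ _)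
          ((iq'.continuousOn_mul i2.continuousOn).const_mul dp) fun x hx => ?_
        have h1 : 1 ≤ dp * (q x)⁻¹ := by
          rw [← div_eq_mul_inv]
          exact (one_le_div (hqpos x hx)).2 (hq x hx).2
        nlinarith [mul_le_mul_of_nonneg_left h1 (sq_nonneg (deriv f x))]
    _ = dp ^ 2 * ∫ x in (0 : ℝ)..(2 * π), deriv f x ^ 2 * (q x)⁻¹ := by
        rw [intervalIntegral.integral_const_mul]; ring
end

section
/- Uniform bounds for the Jacobian of the energy–angle change of variables: if V : ℝ → ℝ is twice continuously differentiable with V(0) = 0, V'(0) = 0 and δ₋ ≤ V''(r) ≤ δ₊ for all r, where 0 < δ₋ ≤ δ₊ < ∞, then for every r ≠ 0 one has V'(r) ≠ 0 and √δ₋/δ₊ ≤ √(2V(r))/|V'(r)| ≤ √δ₊/δ₋. -/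
/-!
Integrating `δ₋ ≤ V'' ≤ δ₊` once and twice from the critical point `0` gives
`δ₋ |r| ≤ |V'(r)| ≤ δ₊ |r|` and `δ₋ r² ≤ 2 V(r) ≤ δ₊ r²`; dividing the square root of the second
chain by the first yields the claim. All four bounds come from
`nonneg_of_second_deriv_nonneg`, applied to `V - δ₋ x²/2` and `δ₊ x²/2 - V`.
-/

open Real

/-- A convex function on the line vanishing to first order at `0` has its minimum there, and its
derivative has the sign of the variable. -/
lemma nonneg_of_second_deriv_nonneg {f f' f'' : ℝ → ℝ}
    (hf : ∀ x, HasDerivAt f (f' x) x) (hf' : ∀ x, HasDerivAt f' (f'' x) x)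
    (h2 : ∀ x, 0 ≤ f'' x) (h0 : f 0 = 0) (h0' : f' 0 = 0) (r : ℝ) :
    0 ≤ r * f' r ∧ 0 ≤ f r := by
  have hmono : Monotone f' := monotone_of_hasDerivAt_nonneg hf' h2
  have hdiff : Differentiable ℝ f := fun x => (hf x).differentiableAt
  rcases le_total 0 r with hr | hr
  · refine ⟨mul_nonneg hr (h0' ▸ hmono hr), ?_⟩
    have hm : MonotoneOn f (Set.Ici 0) := by
      refine monotoneOn_of_deriv_nonneg (convex_Ici 0) hdiff.continuous.continuousOn
        hdiff.differentiableOn fun x hx => ?_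
      rw [(hf x).deriv, ← h0']
      exact hmono (interior_subset hx)
    exact h0 ▸ hm Set.self_mem_Ici hr hr
  · refine ⟨mul_nonneg_of_nonpos_of_nonpos hr (h0' ▸ hmono hr), ?_⟩
    have hm : AntitoneOn f (Set.Iic 0) := by
      refine antitoneOn_of_deriv_nonpos (convex_Iic 0) hdiff.continuous.continuousOn
        hdiff.differentiableOn fun x hx => ?_
      rw [(hf x).deriv, ← h0']
      exact hmono (Set.mem_Iic.1 (interior_subset hx))
    exact h0 ▸ hm hr Set.self_mem_Iic hr

/-- Uniform bounds for the Jacobian of the energy–angle change of variables: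
if `V` is `C²` with `V(0) = 0`, `V'(0) = 0` and `δ₋ ≤ V'' ≤ δ₊`, then for
`r ≠ 0` one has `V'(r) ≠ 0` and `√δ₋/δ₊ ≤ √(2V(r))/|V'(r)| ≤ √δ₊/δ₋`. -/
theorem jacobian_bounds_energy_angle
    (V : ℝ → ℝ) (hV : ContDiff ℝ 2 V) (hV0 : V 0 = 0) (hdV0 : deriv V 0 = 0)
    (δm δp : ℝ) (hδm : 0 < δm) (hδmp : δm ≤ δp)
    (hVpp : ∀ r : ℝ, δm ≤ deriv (deriv V) r ∧ deriv (deriv V) r ≤ δp) :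
    ∀ r : ℝ, r ≠ 0 →
      deriv V r ≠ 0 ∧
      Real.sqrt δm / δp ≤ Real.sqrt (2 * V r) / |deriv V r| ∧
      Real.sqrt (2 * V r) / |deriv V r| ≤ Real.sqrt δp / δm := by
  intro r hr
  have hV1 : ∀ x, HasDerivAt V (deriv V x) x := fun x =>
    ((hV.differentiable (by norm_num)) x).hasDerivAt
  have hV2 : ∀ x, HasDerivAt (deriv V) (deriv (deriv V) x) x := fun x =>
    ((hV.differentiable_deriv_two) x).hasDerivAt
  have hq : ∀ c x : ℝ, HasDerivAt (fun y : ℝ => c / 2 * y ^ 2) (c * x) x := fun c x => by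
    have h := ((hasDerivAt_id' x).fun_pow 2).const_mul (c / 2)
    exact h.congr_deriv (by push_cast; ring)
  have hl : ∀ c x : ℝ, HasDerivAt (fun y : ℝ => c * y) c x := fun c x => by
    simpa using (hasDerivAt_id x).const_mul c
  obtain ⟨hD1, hS1⟩ := nonneg_of_second_deriv_nonneg
    (fun x => (hV1 x).fun_sub (hq δm x)) (fun x => (hV2 x).fun_sub (hl δm x))
    (fun x => sub_nonneg.2 (hVpp x).1) (by simp [hV0]) (by simp [hdV0]) r
  obtain ⟨hD2, hS2⟩ := nonneg_of_second_deriv_nonneg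
    (fun x => (hq δp x).fun_sub (hV1 x)) (fun x => (hl δp x).fun_sub (hV2 x))
    (fun x => sub_nonneg.2 (hVpp x).2) (by simp [hV0]) (by simp [hdV0]) r
  have hδp : 0 < δp := hδm.trans_le hδmp
  have ha : 0 < |r| := abs_pos.2 hr
  have haa : |r| * |r| = r * r := abs_mul_abs_self r
  -- `r` and `V'(r)` have the same sign.
  have hprod : |r| * |deriv V r| = r * deriv V r := by
    rw [← abs_mul, abs_of_nonneg]
    nlinarith [mul_nonneg hδm.le (mul_self_nonneg r)]
  have hDlo : δm * |r| ≤ |deriv V r| := le_of_mul_le_mul_left (by nlinarith) ha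
  have hDhi : |deriv V r| ≤ δp * |r| := le_of_mul_le_mul_left (by nlinarith) ha
  have hDpos : 0 < |deriv V r| := (mul_pos hδm ha).trans_le hDlo
  have hSlo : √δm * |r| ≤ √(2 * V r) := by
    rw [← Real.sqrt_sq_eq_abs, ← Real.sqrt_mul hδm.le]
    exact Real.sqrt_le_sqrt (by linarith)
  have hShi : √(2 * V r) ≤ √δp * |r| := by
    rw [← Real.sqrt_sq_eq_abs, ← Real.sqrt_mul hδp.le]
    exact Real.sqrt_le_sqrt (by linarith)
  refine ⟨abs_pos.1 hDpos, ?_, ?_⟩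
  · rw [div_le_div_iff₀ hδp hDpos]
    calc √δm * |deriv V r| ≤ √δm * (δp * |r|) := by gcongr
      _ = √δm * |r| * δp := by ring
      _ ≤ √(2 * V r) * δp := by gcongr
  · rw [div_le_div_iff₀ hDpos hδm]
    calc √(2 * V r) * δm ≤ √δp * |r| * δm := by gcongr
      _ = √δp * (δm * |r|) := by ring
      _ ≤ √δp * |deriv V r| := by gcongr
end

section
/- Weighted Poincaré inequality on an interval: for every E > 0 and every continuously differentiable function g : [0,E] → ℝ with ∫₀^E g(t) dt = 0, one has ∫₀^E g(t)² dt ≤ (1/2) ∫₀^E t(E − t) g'(t)² dt. -/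
/-!
Let `G t = ∫₀ᵗ g` and `w t = t (E - t)`, so that `G 0 = G E = 0` and `w'' = -2`. On `(0, E)`,

`½ w g'² - g² = ½ w (g' + 2 G / w)² + (g - w' G / w)² + (w' G² / w - 2 G g)'`.

The squares are nonnegative, and `Φ = w' G² / w - 2 G g` is continuous on `[0, E]` with zero
boundary values, because `|G| ≤ C w` there (`abs_primitive_le_weight`). Integrating gives
`0 ≤ ∫ (½ w g'² - g²)`.
-/

open MeasureTheory Real

/-- A primitive of a continuous mean-zero function vanishes linearly at both ends of `[0, E]`,
hence is bounded by a multiple of the weight `t (E - t)`. -/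
lemma abs_primitive_le_weight {E : ℝ} (hE : 0 < E) {g : ℝ → ℝ}
    (hg : ContinuousOn g (Set.Icc 0 E)) (hmean : ∫ t in (0 : ℝ)..E, g t = 0) :
    ∃ C : ℝ, 0 ≤ C ∧ ∀ t ∈ Set.Icc 0 E, |∫ s in (0 : ℝ)..t, g s| ≤ C * (t * (E - t)) := by
  obtain ⟨M, hM⟩ := isCompact_Icc.exists_bound_of_continuousOn hg
  have hM0 : 0 ≤ M := (norm_nonneg _).trans (hM 0 ⟨le_rfl, hE.le⟩)
  refine ⟨2 * M / E, by positivity, fun t ht => ?_⟩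
  have hint : ∀ a ∈ Set.Icc 0 E, ∀ b ∈ Set.Icc 0 E, IntervalIntegrable g volume a b :=
    fun a ha b hb => (hg.mono (Set.uIcc_subset_Icc ha hb)).intervalIntegrable
  have hsub : ∀ a ∈ Set.Icc 0 E, ∀ b ∈ Set.Icc 0 E, ∀ x ∈ Set.uIoc a b, ‖g x‖ ≤ M :=
    fun a ha b hb x hx => hM x (Set.uIcc_subset_Icc ha hb (Set.uIoc_subset_uIcc hx))
  have h0 : (0 : ℝ) ∈ Set.Icc 0 E := ⟨le_rfl, hE.le⟩
  have hEm : E ∈ Set.Icc 0 E := ⟨hE.le, le_rfl⟩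
  have h1 := intervalIntegral.norm_integral_le_of_norm_le_const (hsub 0 h0 t ht)
  have h2 := intervalIntegral.norm_integral_le_of_norm_le_const (hsub t ht E hEm)
  have hadd := intervalIntegral.integral_add_adjacent_intervals (hint 0 h0 t ht) (hint t ht E hEm)
  rw [hmean] at hadd
  rw [eq_neg_of_add_eq_zero_right hadd, norm_neg, Real.norm_eq_abs,
    abs_of_nonneg (sub_nonneg.2 ht.2)] at h2
  rw [Real.norm_eq_abs, sub_zero, abs_of_nonneg ht.1] at h1
  rw [div_mul_eq_mul_div, le_div_iff₀ hE]
  -- `|G| E = |G| (E - t) + |G| t`, with `|G| ≤ M t` and `|G| ≤ M (E - t)`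
  nlinarith [mul_le_mul_of_nonneg_right h1 (sub_nonneg.2 ht.2), mul_le_mul_of_nonneg_right h2 ht.1]

/-- Weighted Poincaré inequality on an interval: for every `E > 0` and every
`C¹` function `g` on `[0, E]` with `∫₀^E g = 0`,
`∫₀^E g² ≤ (1/2) ∫₀^E t(E−t) g'(t)² dt`. -/
theorem weighted_poincare_interval
    (E : ℝ) (hE : 0 < E) (g : ℝ → ℝ)
    (hg : ContDiffOn ℝ 1 g (Set.Icc 0 E))
    (hmean : ∫ t in (0 : ℝ)..E, g t = 0) :
    ∫ t in (0 : ℝ)..E, (g t) ^ 2 ≤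
      (1 / 2) * ∫ t in (0 : ℝ)..E, t * (E - t) * (derivWithin g (Set.Icc 0 E) t) ^ 2 := by
  have hgc := hg.continuousOn
  have hdc : ContinuousOn (derivWithin g (Set.Icc 0 E)) (Set.Icc 0 E) :=
    hg.continuousOn_derivWithin (uniqueDiffOn_Icc hE) le_rfl
  obtain ⟨C, hC0, hC⟩ := abs_primitive_le_weight hE hgc hmean
  set g' := derivWithin g (Set.Icc 0 E) with hg'
  set G : ℝ → ℝ := fun t => ∫ s in (0 : ℝ)..t, g s with hG
  have hgd : ∀ t ∈ Set.Ioo 0 E, HasDerivAt g (g' t) t := fun t ht =>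
    ((hg.differentiableOn one_ne_zero) t
      (Set.Ioo_subset_Icc_self ht)).hasDerivWithinAt.hasDerivAt (Icc_mem_nhds ht.1 ht.2)
  have hGd : ∀ t ∈ Set.Ioo 0 E, HasDerivAt G (g t) t := fun t ht =>
    intervalIntegral.integral_hasDerivAt_right
      ((hgc.mono (Set.uIcc_subset_Icc ⟨le_rfl, hE.le⟩
        (Set.Ioo_subset_Icc_self ht))).intervalIntegrable)
      ((hgc.mono Set.Ioo_subset_Icc_self).stronglyMeasurableAtFilter isOpen_Ioo t ht)
      (hgd t ht).continuousAt
  have hGc : ContinuousOn G (Set.Icc 0 E) := by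
    have := intervalIntegral.continuousOn_primitive_interval (μ := volume) (f := g)
      (a := 0) (b := E) (by rw [Set.uIcc_of_le hE.le]; exact hgc.integrableOn_Icc)
    rwa [Set.uIcc_of_le hE.le] at this
  set Q : ℝ → ℝ := fun t => (E - 2 * t) * G t ^ 2 / (t * (E - t)) with hQ
  have hQb : ∀ t ∈ Set.Icc 0 E, |Q t| ≤ E * C ^ 2 * (t * (E - t)) := by
    intro t ht
    have hw : 0 ≤ t * (E - t) := mul_nonneg ht.1 (sub_nonneg.2 ht.2)
    have h1 : |E - 2 * t| ≤ E := abs_le.2 ⟨by linarith [ht.2], by linarith [ht.1]⟩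
    have h2 : |G t| ^ 2 ≤ (C * (t * (E - t))) ^ 2 := pow_le_pow_left₀ (abs_nonneg _) (hC t ht) 2
    simp only [hQ]
    rw [abs_div, abs_mul, abs_pow, abs_of_nonneg hw]
    refine div_le_of_le_mul₀ hw (by positivity) ?_
    calc |E - 2 * t| * |G t| ^ 2 ≤ E * (C * (t * (E - t))) ^ 2 := by gcongr
      _ = _ := by ring
  -- at an endpoint the denominator vanishes, and the bound shows that the value `0` given by
  -- division by zero is the limit
  have hQend : ∀ t ∈ Set.Icc 0 E, t * (E - t) = 0 → ContinuousWithinAt Q (Set.Icc 0 E) t := by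
    intro t ht h0
    have hQt : Q t = 0 := by simp [hQ, h0]
    rw [ContinuousWithinAt, hQt]
    refine squeeze_zero_norm' (a := fun s => E * C ^ 2 * (s * (E - s))) ?_ ?_
    · filter_upwards [self_mem_nhdsWithin] with s hs using hQb s hs
    · have : Continuous fun s : ℝ => E * C ^ 2 * (s * (E - s)) := by fun_prop
      have h := this.continuousWithinAt (s := Set.Icc 0 E) (x := t)
      rwa [ContinuousWithinAt, h0, mul_zero] at h
  have hQc : ContinuousOn Q (Set.Icc 0 E) := by
    intro t ht
    by_cases h0 : t * (E - t) = 0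
    · exact hQend t ht h0
    · exact ((by fun_prop : Continuous fun s : ℝ => E - 2 * s).continuousWithinAt.mul
        ((hGc t ht).pow 2)).div
        (by fun_prop : Continuous fun s : ℝ => s * (E - s)).continuousWithinAt h0
  set Φ : ℝ → ℝ := fun t => Q t - 2 * (G t * g t) with hΦ
  have hΦc : ContinuousOn Φ (Set.Icc 0 E) := hQc.sub (continuousOn_const.mul (hGc.mul hgc))
  have hΦd : ∀ t ∈ Set.Ioo 0 E, HasDerivAt Φ
      ((((-2) * G t ^ 2 + (E - 2 * t) * (2 * G t * g t)) * (t * (E - t))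
        - (E - 2 * t) * G t ^ 2 * (E - 2 * t)) / (t * (E - t)) ^ 2
        - 2 * (g t * g t + G t * g' t)) t := by
    intro t ht
    have hw : t * (E - t) ≠ 0 := (mul_pos ht.1 (sub_pos.2 ht.2)).ne'
    have hlin : HasDerivAt (fun s : ℝ => E - 2 * s) (-2) t := by
      simpa using ((hasDerivAt_id t).const_mul 2).const_sub E
    have hwd : HasDerivAt (fun s : ℝ => s * (E - s)) (E - 2 * t) t := by
      refine ((hasDerivAt_id' t).mul ((hasDerivAt_id' t).const_sub E)).congr_deriv ?_
      ring
    have hG2 : HasDerivAt (fun s => G s ^ 2) (2 * G t * g t) t := by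
      exact ((hGd t ht).pow 2).congr_deriv (by norm_num)
    exact ((hlin.mul hG2).div hwd hw).sub (((hGd t ht).mul (hgd t ht)).const_mul 2)
  have hwc : ContinuousOn (fun t => t * (E - t) * g' t ^ 2) (Set.Icc 0 E) :=
    (by fun_prop : Continuous fun s : ℝ => s * (E - s)).continuousOn.mul (hdc.pow 2)
  have hg2 : ContinuousOn (fun t => g t ^ 2) (Set.Icc 0 E) := hgc.pow 2
  have hφc : ContinuousOn (fun t => 1 / 2 * (t * (E - t) * g' t ^ 2) - g t ^ 2) (Set.Icc 0 E) :=
    (continuousOn_const.mul hwc).sub hg2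
  have key := intervalIntegral.sub_le_integral_of_hasDeriv_right_of_le hE.le hΦc
    (fun t ht => (hΦd t ht).hasDerivWithinAt) hφc.integrableOn_Icc (by
      intro t ht
      have hw : 0 < t * (E - t) := mul_pos ht.1 (sub_pos.2 ht.2)
      have ht0 : t ≠ 0 := ht.1.ne'
      have htE : E - t ≠ 0 := (sub_pos.2 ht.2).ne'
      have hpos : 0 ≤ 1 / 2 * (t * (E - t)) * (g' t + 2 * G t / (t * (E - t))) ^ 2
        + (g t - (E - 2 * t) * G t / (t * (E - t))) ^ 2 := by positivity
      rw [← sub_nonneg]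
      convert hpos using 1
      field_simp
      ring)
  have hG0 : G 0 = 0 := by simp [hG]
  have hGE : G E = 0 := hmean
  have hΦ0 : Φ 0 = 0 := by simp [hΦ, hQ, hG0]
  have hΦE : Φ E = 0 := by simp [hΦ, hQ, hGE]
  have hi : ∀ {f : ℝ → ℝ}, ContinuousOn f (Set.Icc 0 E) → IntervalIntegrable f volume 0 E :=
    fun h => h.intervalIntegrable_of_Icc hE.le
  rw [hΦ0, hΦE, intervalIntegral.integral_sub ((hi hwc).const_mul _) (hi hg2),
    intervalIntegral.integral_const_mul] at key
  linarith
end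

section
/- Two-site spectral gap: there exists a constant C > 0 depending only on c₀ and C₀ such that for every E > 0 and every continuously differentiable g : [0,E] → ℝ, ∫₀^E (g(t) − m)² dμ_E(t) ≤ C ∫₀^E t(E − t) g'(t)² dμ_E(t), where m = ∫₀^E g dμ_E. -/
/-!
The densities `h t * h (E - t)` lie between `c₀² e^{-E}` and `C₀² e^{-E}`, because the exponentials
multiply to the constant `e^{-E}`. So `μ_E` is comparable, with ratio at most `C₀² / c₀²`, to a
multiple of Lebesgue measure on `[0, E]`, and it suffices to have a weighted Poincaré inequality for
Lebesgue measure. This one is of Hardy type: with `u = g - g (E / 2)`, integrating `((t - p) u²)'`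
over a half interval whose outer endpoint is `p` gives no boundary term, so
`∫ u² = -∫ 2 (t - p) u u' ≤ ∫ (u² / 2 + 2 (t - p)² u'²)`, that is `∫ u² ≤ 4 ∫ (t - p)² u'²`
(`hardy_interval`). On each half `(t - p)² ≤ t (E - t)`, so the two halves add up to
`poincare_lebesgue`. Finally the variance is at most the second moment about the point `g (E / 2)`.
The constant obtained is `4 C₀² / c₀²`.
-/


open MeasureTheory Real

/-- The probability measure `μ_E` on `[0, E]` with density
`h(t)h(E−t) / ∫₀^E h(s)h(E−s) ds` with respect to Lebesgue measure. -/
noncomputable def muTwo (h : ℝ → ℝ) (E : ℝ) : Measure ℝ :=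
  (volume.restrict (Set.Icc 0 E)).withDensity fun t =>
    ENNReal.ofReal (h t * h (E - t) / ∫ s in (0 : ℝ)..E, h s * h (E - s))

/-- Hardy inequality on `[a, b]` with weight `(t - p)²`; the hypothesis `hbd` says that the boundary
terms of the integration by parts cancel. -/
lemma hardy_interval {a b p : ℝ} (hab : a ≤ b) {u u' : ℝ → ℝ}
    (hu : ContinuousOn u (Set.Icc a b)) (hu' : ContinuousOn u' (Set.Icc a b))
    (hd : ∀ t ∈ Set.Ioo a b, HasDerivAt u (u' t) t)
    (hbd : (b - p) * u b ^ 2 - (a - p) * u a ^ 2 = 0) :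
    ∫ t in a..b, u t ^ 2 ≤ 4 * ∫ t in a..b, (t - p) ^ 2 * u' t ^ 2 := by
  have hI : ∀ {f : ℝ → ℝ}, ContinuousOn f (Set.Icc a b) → IntervalIntegrable f volume a b :=
    fun hf => hf.intervalIntegrable_of_Icc hab
  have c1 : ContinuousOn (fun t => u t ^ 2) (Set.Icc a b) := by fun_prop
  have c2 : ContinuousOn (fun t => 2 * (t - p) * u t * u' t) (Set.Icc a b) := by fun_prop
  have c3 : ContinuousOn (fun t => (t - p) ^ 2 * u' t ^ 2) (Set.Icc a b) := by fun_prop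
  have key : ∫ t in a..b, (u t ^ 2 + 2 * (t - p) * u t * u' t) = 0 := by
    rw [intervalIntegral.integral_eq_sub_of_hasDerivAt_of_le hab
      (f := fun t => (t - p) * u t ^ 2) (by fun_prop) _
      (by exact hI (c1.add c2))]
    · exact hbd
    · intro t ht
      have h1 := ((hasDerivAt_id t).sub_const p).mul ((hd t ht).pow 2)
      refine h1.congr_deriv ?_
      simp
      ring
  rw [intervalIntegral.integral_add (hI c1) (hI c2)] at key
  have hle : ∫ t in a..b, -(2 * (t - p) * u t * u' t) ≤
      ∫ t in a..b, ((1 / 2) * u t ^ 2 + 2 * ((t - p) ^ 2 * u' t ^ 2)) := by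
    apply intervalIntegral.integral_mono_on hab (hI c2).neg
      (((hI c1).const_mul _).add ((hI c3).const_mul _))
    intro t _
    simp only [Pi.neg_apply]
    nlinarith [sq_nonneg (u t + 2 * ((t - p) * u' t))]
  rw [intervalIntegral.integral_neg, intervalIntegral.integral_add ((hI c1).const_mul _)
    ((hI c3).const_mul _), intervalIntegral.integral_const_mul,
    intervalIntegral.integral_const_mul] at hle
  linarith

/-- Weighted Poincaré inequality for Lebesgue measure on `[0, E]`, centred at the midpoint value. -/
lemma poincare_lebesgue {E : ℝ} (hE : 0 < E) {g g' : ℝ → ℝ}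
    (hg : ContinuousOn g (Set.Icc 0 E)) (hg' : ContinuousOn g' (Set.Icc 0 E))
    (hd : ∀ t ∈ Set.Ioo 0 E, HasDerivAt g (g' t) t) :
    ∫ t in (0 : ℝ)..E, (g t - g (E / 2)) ^ 2 ≤
      4 * ∫ t in (0 : ℝ)..E, t * (E - t) * g' t ^ 2 := by
  have s1 : Set.Icc 0 (E / 2) ⊆ Set.Icc 0 E := Set.Icc_subset_Icc_right (by linarith)
  have s2 : Set.Icc (E / 2) E ⊆ Set.Icc 0 E := Set.Icc_subset_Icc_left (by linarith)
  have l1 : (0 : ℝ) ≤ E / 2 := by linarith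
  have l2 : E / 2 ≤ E := by linarith
  have c1 : ContinuousOn (fun t => (g t - g (E / 2)) ^ 2) (Set.Icc 0 E) := by fun_prop
  have c2 : ContinuousOn (fun t => t * (E - t) * g' t ^ 2) (Set.Icc 0 E) := by fun_prop
  have c3 : ∀ p : ℝ, ContinuousOn (fun t => (t - p) ^ 2 * g' t ^ 2) (Set.Icc 0 E) := by
    intro p; fun_prop
  have hu : ContinuousOn (fun t => g t - g (E / 2)) (Set.Icc 0 E) := by fun_prop
  have h1 := hardy_interval (p := 0) l1 (hu.mono s1) (hg'.mono s1)
    (fun t ht => (hd t ⟨ht.1, ht.2.trans_le l2⟩).sub_const _) (by simp)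
  have h2 := hardy_interval (p := E) l2 (hu.mono s2) (hg'.mono s2)
    (fun t ht => (hd t ⟨l1.trans_lt ht.1, ht.2⟩).sub_const _) (by simp)
  have m1 : ∫ t in (0 : ℝ)..(E / 2), (t - 0) ^ 2 * g' t ^ 2 ≤
      ∫ t in (0 : ℝ)..(E / 2), t * (E - t) * g' t ^ 2 := by
    apply intervalIntegral.integral_mono_on l1
      (((c3 0).mono s1).intervalIntegrable_of_Icc l1) ((c2.mono s1).intervalIntegrable_of_Icc l1)
    intro t ht
    apply mul_le_mul_of_nonneg_right _ (sq_nonneg _)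
    nlinarith [ht.1, ht.2, mul_nonneg ht.1 (sub_nonneg.2 ht.2)]
  have m2 : ∫ t in (E / 2)..E, (t - E) ^ 2 * g' t ^ 2 ≤
      ∫ t in (E / 2)..E, t * (E - t) * g' t ^ 2 := by
    apply intervalIntegral.integral_mono_on l2
      (((c3 E).mono s2).intervalIntegrable_of_Icc l2) ((c2.mono s2).intervalIntegrable_of_Icc l2)
    intro t ht
    apply mul_le_mul_of_nonneg_right _ (sq_nonneg _)
    nlinarith [ht.1, ht.2, mul_nonneg (sub_nonneg.2 ht.1) (sub_nonneg.2 ht.2)]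
  rw [← intervalIntegral.integral_add_adjacent_intervals
      ((c1.mono s1).intervalIntegrable_of_Icc l1) ((c1.mono s2).intervalIntegrable_of_Icc l2),
    ← intervalIntegral.integral_add_adjacent_intervals
      ((c2.mono s1).intervalIntegrable_of_Icc l1) ((c2.mono s2).intervalIntegrable_of_Icc l2)]
  linarith

/-- The second moment about any point dominates the variance. -/
lemma integral_sub_mean_sq_le {μ : Measure ℝ} [IsProbabilityMeasure μ] {g : ℝ → ℝ}
    (hg : AEMeasurable g μ) (c : ℝ) :
    ∫ t, (g t - ∫ s, g s ∂μ) ^ 2 ∂μ ≤ ∫ t, (g t - c) ^ 2 ∂μ := by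
  rw [← ProbabilityTheory.variance_eq_integral hg,
    ← ProbabilityTheory.variance_sub_const hg.aestronglyMeasurable c]
  exact ProbabilityTheory.variance_le_expectation_sq (hg.sub_const c).aestronglyMeasurable

/-- Two-site spectral gap: there exists `C > 0` depending only on `c₀, C₀`
such that for every density `h` with `c₀ e^{−x} ≤ h(x) ≤ C₀ e^{−x}` on `[0,∞)`,
every `E > 0` and every `C¹` function `g` on `[0,E]`,
`∫₀^E (g − m)² dμ_E ≤ C ∫₀^E t(E−t) g'(t)² dμ_E(t)`, `m = ∫ g dμ_E`. -/
theorem two_site_spectral_gap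
    (c₀ C₀ : ℝ) (hc₀ : 0 < c₀) (hcC : c₀ ≤ C₀) :
    ∃ C : ℝ, 0 < C ∧
      ∀ h : ℝ → ℝ, Measurable h →
        (∀ x : ℝ, 0 ≤ x → c₀ * Real.exp (-x) ≤ h x ∧ h x ≤ C₀ * Real.exp (-x)) →
        ∀ E : ℝ, 0 < E → ∀ g : ℝ → ℝ, ContDiffOn ℝ 1 g (Set.Icc 0 E) →
          ∫ t, (g t - ∫ s, g s ∂(muTwo h E)) ^ 2 ∂(muTwo h E) ≤
            C * ∫ t, t * (E - t) * (derivWithin g (Set.Icc 0 E) t) ^ 2 ∂(muTwo h E) := by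
  have hC₀ : 0 < C₀ := hc₀.trans_le hcC
  refine ⟨4 * (C₀ ^ 2 / c₀ ^ 2), by positivity, ?_⟩
  intro h hm hb E hE g hg
  set g' := derivWithin g (Set.Icc 0 E) with hg'def
  have cg : ContinuousOn g (Set.Icc 0 E) := hg.continuousOn
  have cg' : ContinuousOn g' (Set.Icc 0 E) :=
    hg.continuousOn_derivWithin (uniqueDiffOn_Icc hE) le_rfl
  have hd : ∀ t ∈ Set.Ioo 0 E, HasDerivAt g (g' t) t := fun t ht =>
    ((hg.differentiableOn one_ne_zero) t (Set.Ioo_subset_Icc_self ht)).hasDerivWithinAt.hasDerivAt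
      (Icc_mem_nhds ht.1 ht.2)
  set f : ℝ → ℝ := fun t => h t * h (E - t) with hf
  set a := c₀ ^ 2 * Real.exp (-E) with ha
  set b := C₀ ^ 2 * Real.exp (-E) with hbdef
  have a0 : 0 < a := by positivity
  have b0 : 0 < b := by positivity
  have fm : Measurable f := by fun_prop
  have hexp : ∀ t : ℝ, Real.exp (-t) * Real.exp (-(E - t)) = Real.exp (-E) := by
    intro t; rw [← Real.exp_add]; congr 1; ring
  have fab : ∀ t ∈ Set.Icc 0 E, a ≤ f t ∧ f t ≤ b := by
    intro t ht
    obtain ⟨p1, p2⟩ := hb t ht.1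
    obtain ⟨q1, q2⟩ := hb (E - t) (sub_nonneg.2 ht.2)
    have q0 : 0 ≤ h (E - t) := le_trans (by positivity) q1
    constructor
    · calc a = (c₀ * Real.exp (-t)) * (c₀ * Real.exp (-(E - t))) := by
            rw [ha, ← hexp t]; ring
        _ ≤ f t := mul_le_mul p1 q1 (by positivity) (le_trans (by positivity) p1)
    · calc f t ≤ (C₀ * Real.exp (-t)) * (C₀ * Real.exp (-(E - t))) :=
            mul_le_mul p2 q2 q0 (by positivity)
        _ = b := by rw [hbdef, ← hexp t]; ring
  have fint : IntegrableOn f (Set.Icc 0 E) := by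
    refine Measure.integrableOn_of_bounded (M := b) (by simp) fm.aestronglyMeasurable ?_
    filter_upwards [ae_restrict_mem measurableSet_Icc] with t ht
    rw [Real.norm_of_nonneg (a0.le.trans (fab t ht).1)]
    exact (fab t ht).2
  set Z := ∫ s in (0 : ℝ)..E, f s with hZ
  have hZ' : Z = ∫ s in Set.Icc 0 E, f s := by
    rw [hZ, intervalIntegral.integral_of_le hE.le, integral_Icc_eq_integral_Ioc]
  have Z0 : 0 < Z := by
    have : ∫ _ in (0 : ℝ)..E, a ≤ Z :=
      intervalIntegral.integral_mono_on hE.le (by simp)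
        ((intervalIntegrable_iff_integrableOn_Icc_of_le hE.le).2 fint) (fun t ht => (fab t ht).1)
    simp at this
    exact (mul_pos hE a0).trans_le this
  have hmu : muTwo h E = (volume.restrict (Set.Icc 0 E)).withDensity
      fun t => ENNReal.ofReal (f t / Z) := rfl
  have hprob : IsProbabilityMeasure (muTwo h E) := by
    constructor
    rw [hmu, withDensity_apply _ MeasurableSet.univ, Measure.restrict_univ,
      ← ofReal_integral_eq_lintegral_ofReal (fint.div_const Z), integral_div, ← hZ',
      div_self Z0.ne', ENNReal.ofReal_one]
    filter_upwards [ae_restrict_mem measurableSet_Icc] with t ht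
    exact div_nonneg (a0.le.trans (fab t ht).1) Z0.le
  have hint : ∀ F : ℝ → ℝ, ∫ t, F t ∂(muTwo h E) = ∫ t in Set.Icc 0 E, f t / Z * F t := by
    intro F
    rw [hmu, integral_withDensity_eq_integral_toReal_smul (by fun_prop) (by simp)]
    refine setIntegral_congr_fun measurableSet_Icc fun t ht => ?_
    simp only [smul_eq_mul]
    rw [ENNReal.toReal_ofReal (div_nonneg (a0.le.trans (fab t ht).1) Z0.le)]
  have hwint : ∀ F : ℝ → ℝ, ContinuousOn F (Set.Icc 0 E) →
      IntegrableOn (fun t => f t / Z * F t) (Set.Icc 0 E) := by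
    intro F cF
    exact IntegrableOn.mul_continuousOn (fint.div_const Z) cF isCompact_Icc
  have hgm : AEMeasurable g (muTwo h E) :=
    (cg.aemeasurable measurableSet_Icc).mono_ac (withDensity_absolutelyContinuous _ _)
  have c1 : ContinuousOn (fun t => (g t - g (E / 2)) ^ 2) (Set.Icc 0 E) := by fun_prop
  have c2 : ContinuousOn (fun t => t * (E - t) * g' t ^ 2) (Set.Icc 0 E) := by fun_prop
  have hP := poincare_lebesgue hE cg cg' hd
  rw [intervalIntegral.integral_of_le hE.le, intervalIntegral.integral_of_le hE.le,
    ← integral_Icc_eq_integral_Ioc, ← integral_Icc_eq_integral_Ioc] at hP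
  have up : ∫ t, (g t - g (E / 2)) ^ 2 ∂(muTwo h E) ≤
      b / Z * ∫ t in Set.Icc 0 E, (g t - g (E / 2)) ^ 2 := by
    rw [hint, ← integral_const_mul]
    refine setIntegral_mono_on (hwint _ c1) (c1.integrableOn_Icc.const_mul _) measurableSet_Icc
      fun t ht => ?_
    have := (fab t ht).2
    gcongr
  have low : a / Z * ∫ t in Set.Icc 0 E, t * (E - t) * g' t ^ 2 ≤
      ∫ t, t * (E - t) * g' t ^ 2 ∂(muTwo h E) := by
    rw [hint, ← integral_const_mul]
    refine setIntegral_mono_on (c2.integrableOn_Icc.const_mul _) (hwint _ c2) measurableSet_Icc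
      fun t ht => ?_
    have := (fab t ht).1
    have h0 : 0 ≤ t * (E - t) * g' t ^ 2 :=
      mul_nonneg (mul_nonneg ht.1 (sub_nonneg.2 ht.2)) (sq_nonneg _)
    gcongr
  calc ∫ t, (g t - ∫ s, g s ∂(muTwo h E)) ^ 2 ∂(muTwo h E)
      ≤ ∫ t, (g t - g (E / 2)) ^ 2 ∂(muTwo h E) := integral_sub_mean_sq_le hgm _
    _ ≤ b / Z * ∫ t in Set.Icc 0 E, (g t - g (E / 2)) ^ 2 := up
    _ ≤ b / Z * (4 * ∫ t in Set.Icc 0 E, t * (E - t) * g' t ^ 2) := by gcongr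
    _ = 4 * (C₀ ^ 2 / c₀ ^ 2) * (a / Z * ∫ t in Set.Icc 0 E, t * (E - t) * g' t ^ 2) := by
        rw [ha, hbdef]; field_simp
    _ ≤ 4 * (C₀ ^ 2 / c₀ ^ 2) * ∫ t, t * (E - t) * g' t ^ 2 ∂(muTwo h E) := by gcongr
end

section
/- Exact fluctuation–dissipation decomposition for the harmonic chain: let V(r) = r²/2 and γ > 0. Set φ = (1/(6γ) + γ/4) p₀² + (1/(6γ)) r₀ r₁ and ψ = (1/(6γ))(p₀ + p₁) r₁ + r₁²/4, regarded as smooth local functions on Ω = (ℝ²)^ℤ. Then at every point of Ω, W^A_{0,1} + W^S_{0,1} = −p₀ r₁ + (γ/2)(p₀² − r₁²) = −(τ₁ φ − φ) + (A + γS) ψ. In particular the total energy current across the bond (0,1) is the sum of a discrete spatial gradient and a term in the range of the generator, with diffusion coefficient D = γ/4 + 1/(6γ). -/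
/-!
Write `φ`, `ψ` for the two local functions of the decomposition. Only the sites `i = 0, 1` contribute
to `A ψ` and `S ψ`, since `ψ` depends on `p₀, p₁, r₁` alone.
With `a = 1/(6γ)`, computing the four vector fields `X₀, Y₀₁, X₁, Y₁₂` on `ψ` and iterating them
once (`Ah_psi`, `Sh_psi`) gives

* `A ψ = a (p₁² - p₀²) + (p₁ - p₀) r₁ / 2 + a (r₁ r₂ - r₀ r₁)`,
* `S ψ = (p₀² + p₁²) / 4 - r₁² / 2 - 3 a (p₀ + p₁) r₁`.

The `a`-terms of `A ψ` cancel against the gradient of `φ`, and `γ a = 1/6` turns the last term of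
`γ S ψ` into `-(p₀ + p₁) r₁ / 2`, which combines with `(p₁ - p₀) r₁ / 2` to give `-p₀ r₁`.

Every function that gets differentiated is at most quadratic in each single coordinate, so all
derivatives come from `Yh_of_quadratic`.
-/

open MeasureTheory Real

/-- The harmonic (`V(r) = r²/2`) vector field
`Y_{i,j} f = p_i ∂f/∂r_j − r_j ∂f/∂p_i`. -/
noncomputable def Yh (i j : ℤ) (f : Om → ℝ) : Om → ℝ :=
  fun ω => ω.1 i * pdr j f ω - ω.2 j * pdp i f ω

/-- The Liouville operator `A f = Σ_{i∈ℤ}(X_i f − Y_{i,i+1} f)` for the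
harmonic chain; for local `f` all but finitely many terms vanish. -/
noncomputable def Ah (f : Om → ℝ) : Om → ℝ :=
  fun ω => ∑ᶠ i : ℤ, (Yh i i f ω - Yh i (i + 1) f ω)

/-- The noise generator `S f = (1/2) Σ_{i∈ℤ}(X_i(X_i f) + Y_{i,i+1}(Y_{i,i+1} f))`
for the harmonic chain. -/
noncomputable def Sh (f : Om → ℝ) : Om → ℝ :=
  fun ω => (1 / 2) * ∑ᶠ i : ℤ, (Yh i i (Yh i i f) ω + Yh i (i + 1) (Yh i (i + 1) f) ω)

/-- The shift of configurations: `(τ₁ ω)_i = ω_{i+1}`. -/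
def shiftOne (ω : Om) : Om :=
  (fun i => ω.1 (i + 1), fun i => ω.2 (i + 1))

/-- The Hamiltonian current `W^A_{0,1} = −p₀ r₁` of the harmonic chain. -/
noncomputable def WAh : Om → ℝ := fun ω => -(ω.1 0 * ω.2 1)

/-- The stochastic current `W^S_{0,1} = (γ/2)(p₀² − r₁²)` of the harmonic chain. -/
noncomputable def WSh (γ : ℝ) : Om → ℝ := fun ω => γ / 2 * ((ω.1 0) ^ 2 - (ω.2 1) ^ 2)

lemma deriv_quadratic (c₀ c₁ c₂ x : ℝ) :
    deriv (fun t : ℝ => c₀ + c₁ * t + c₂ * t ^ 2) x = c₁ + 2 * c₂ * x := by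
  have h := (((hasDerivAt_id x).const_mul c₁).const_add c₀).add
    (((hasDerivAt_id x).pow 2).const_mul c₂)
  refine (h.congr_deriv ?_).deriv
  simp
  ring

/-- Evaluation of `Y_{i,j} f` at `ω` when `f` restricts to a quadratic polynomial along the
`p i`-line through `ω` (coefficients `a₀ a₁ a₂`) and along the `r j`-line (`b₀ b₁ b₂`). -/
lemma Yh_of_quadratic {i j : ℤ} {f : Om → ℝ} {ω : Om} (a₀ a₁ a₂ b₀ b₁ b₂ : ℝ)
    (hp : ∀ t, f (Function.update ω.1 i t, ω.2) = a₀ + a₁ * t + a₂ * t ^ 2)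
    (hr : ∀ t, f (ω.1, Function.update ω.2 j t) = b₀ + b₁ * t + b₂ * t ^ 2) :
    Yh i j f ω = ω.1 i * (b₁ + 2 * b₂ * ω.2 j) - ω.2 j * (a₁ + 2 * a₂ * ω.1 i) := by
  simp only [Yh, pdp, pdr, hp, hr, deriv_quadratic]

/-- The local function `ψ`, with an arbitrary constant `a` in place of `1/(6γ)`. -/
noncomputable def psi (a : ℝ) : Om → ℝ :=
  fun ω => a * ((ω.1 0 + ω.1 1) * ω.2 1) + (ω.2 1) ^ 2 / 4

lemma Yh_zero (i j : ℤ) : Yh i j (fun _ => 0) = fun _ => 0 := by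
  funext ω
  simp [Yh, pdp, pdr]

/-- `Y_{i,j} ψ = 0` away from the variables `p₀, p₁, r₁`. -/
lemma Yh_psi_eq_zero (a : ℝ) {i j : ℤ} (h0 : i ≠ 0) (h1 : i ≠ 1) (hj : j ≠ 1) :
    Yh i j (psi a) = fun _ => 0 := by
  funext ω
  rw [Yh_of_quadratic (psi a ω) 0 0 (psi a ω) 0 0] <;>
    simp [psi, h0.symm, h1.symm, hj.symm]

lemma X0_psi (a : ℝ) : Yh 0 0 (psi a) = fun ω => -(a * (ω.2 0 * ω.2 1)) := by
  funext ω
  rw [Yh_of_quadratic (a * (ω.1 1 * ω.2 1) + (ω.2 1) ^ 2 / 4) (a * ω.2 1) 0 (psi a ω) 0 0]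
  · ring
  all_goals intro t; simp [psi]
  all_goals ring

lemma Y01_psi (a : ℝ) : Yh 0 1 (psi a) = fun ω =>
    ω.1 0 * (a * (ω.1 0 + ω.1 1) + ω.2 1 / 2) - a * (ω.2 1) ^ 2 := by
  funext ω
  rw [Yh_of_quadratic (a * (ω.1 1 * ω.2 1) + (ω.2 1) ^ 2 / 4) (a * ω.2 1) 0
    0 (a * (ω.1 0 + ω.1 1)) (1 / 4)]
  · ring
  all_goals intro t; simp [psi]
  all_goals ring

lemma X1_psi (a : ℝ) : Yh 1 1 (psi a) = fun ω =>
    ω.1 1 * (a * (ω.1 0 + ω.1 1) + ω.2 1 / 2) - a * (ω.2 1) ^ 2 := by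
  funext ω
  rw [Yh_of_quadratic (a * (ω.1 0 * ω.2 1) + (ω.2 1) ^ 2 / 4) (a * ω.2 1) 0
    0 (a * (ω.1 0 + ω.1 1)) (1 / 4)]
  · ring
  all_goals intro t; simp [psi]
  all_goals ring

lemma Y12_psi (a : ℝ) : Yh 1 2 (psi a) = fun ω => -(a * (ω.2 1 * ω.2 2)) := by
  funext ω
  rw [Yh_of_quadratic (a * (ω.1 0 * ω.2 1) + (ω.2 1) ^ 2 / 4) (a * ω.2 1) 0 (psi a ω) 0 0]
  · ring
  all_goals intro t; simp [psi]
  all_goals ring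

lemma X0_X0_psi (a : ℝ) (ω : Om) :
    Yh 0 0 (Yh 0 0 (psi a)) ω = -(a * (ω.1 0 * ω.2 1)) := by
  rw [X0_psi, Yh_of_quadratic (-(a * (ω.2 0 * ω.2 1))) 0 0 0 (-(a * ω.2 1)) 0]
  · ring
  all_goals intro t; simp
  all_goals ring

lemma Y01_Y01_psi (a : ℝ) (ω : Om) :
    Yh 0 1 (Yh 0 1 (psi a)) ω =
      (ω.1 0) ^ 2 / 2 - (ω.2 1) ^ 2 / 2 - a * ((4 * ω.1 0 + ω.1 1) * ω.2 1) := by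
  rw [Y01_psi, Yh_of_quadratic (-(a * (ω.2 1) ^ 2)) (a * ω.1 1 + ω.2 1 / 2) a
    (ω.1 0 * (a * (ω.1 0 + ω.1 1))) (ω.1 0 / 2) (-a)]
  · ring
  all_goals intro t; simp
  all_goals ring

lemma X1_X1_psi (a : ℝ) (ω : Om) :
    Yh 1 1 (Yh 1 1 (psi a)) ω =
      (ω.1 1) ^ 2 / 2 - (ω.2 1) ^ 2 / 2 - a * ((ω.1 0 + 4 * ω.1 1) * ω.2 1) := by
  rw [X1_psi, Yh_of_quadratic (-(a * (ω.2 1) ^ 2)) (a * ω.1 0 + ω.2 1 / 2) a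
    (ω.1 1 * (a * (ω.1 0 + ω.1 1))) (ω.1 1 / 2) (-a)]
  · ring
  all_goals intro t; simp
  all_goals ring

lemma Y12_Y12_psi (a : ℝ) (ω : Om) :
    Yh 1 2 (Yh 1 2 (psi a)) ω = -(a * (ω.1 1 * ω.2 1)) := by
  rw [Y12_psi, Yh_of_quadratic (-(a * (ω.2 1 * ω.2 2))) 0 0 0 (-(a * ω.2 1)) 0]
  · ring
  all_goals intro t; simp
  all_goals ring

lemma finsum_eq_zero_one (g : ℤ → ℝ) (hg : ∀ i, i ≠ 0 → i ≠ 1 → g i = 0) :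
    ∑ᶠ i, g i = g 0 + g 1 := by
  rw [finsum_eq_sum_of_support_subset (s := {0, 1}) g, Finset.sum_pair (by norm_num)]
  intro i hi
  by_contra h
  simp only [Finset.coe_insert, Finset.coe_singleton, Set.mem_insert_iff,
    Set.mem_singleton_iff, not_or] at h
  exact hi (hg i h.1 h.2)

lemma Ah_psi (a : ℝ) (ω : Om) :
    Ah (psi a) ω = a * ((ω.1 1) ^ 2 - (ω.1 0) ^ 2) + (ω.1 1 - ω.1 0) * ω.2 1 / 2 +
      a * (ω.2 1 * ω.2 2 - ω.2 0 * ω.2 1) := by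
  unfold Ah
  rw [finsum_eq_zero_one]
  · norm_num only [X0_psi, Y01_psi, X1_psi, Y12_psi]
    ring
  · intro i h0 h1
    rw [Yh_psi_eq_zero a h0 h1 h1, Yh_psi_eq_zero a h0 h1 (by lia)]
    simp

lemma Sh_psi (a : ℝ) (ω : Om) :
    Sh (psi a) ω = ((ω.1 0) ^ 2 + (ω.1 1) ^ 2) / 4 - (ω.2 1) ^ 2 / 2 -
      3 * a * ((ω.1 0 + ω.1 1) * ω.2 1) := by
  unfold Sh
  rw [finsum_eq_zero_one]
  · norm_num only [X0_X0_psi, Y01_Y01_psi, X1_X1_psi, Y12_Y12_psi]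
    ring
  · intro i h0 h1
    rw [Yh_psi_eq_zero a h0 h1 h1, Yh_psi_eq_zero a h0 h1 (by lia), Yh_zero, Yh_zero]
    simp

/-- Exact fluctuation–dissipation decomposition for the harmonic chain: with
`φ = (1/(6γ) + γ/4) p₀² + (1/(6γ)) r₀ r₁` and
`ψ = (1/(6γ))(p₀ + p₁) r₁ + r₁²/4`, at every point of `Ω`,
`W^A_{0,1} + W^S_{0,1} = −p₀ r₁ + (γ/2)(p₀² − r₁²) = −(τ₁φ − φ) + (A + γS)ψ`,
exhibiting the diffusion coefficient `D = γ/4 + 1/(6γ)`. -/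
theorem harmonic_fluctuation_dissipation (γ : ℝ) (hγ : 0 < γ) :
    ∀ ω : Om,
      (WAh ω + WSh γ ω = -(ω.1 0 * ω.2 1) + γ / 2 * ((ω.1 0) ^ 2 - (ω.2 1) ^ 2)) ∧
      (-(ω.1 0 * ω.2 1) + γ / 2 * ((ω.1 0) ^ 2 - (ω.2 1) ^ 2) =
        -((fun ω' : Om => (1 / (6 * γ) + γ / 4) * (ω'.1 0) ^ 2 +
            1 / (6 * γ) * (ω'.2 0 * ω'.2 1)) (shiftOne ω) -
          ((1 / (6 * γ) + γ / 4) * (ω.1 0) ^ 2 +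
            1 / (6 * γ) * (ω.2 0 * ω.2 1))) +
        (Ah (fun ω' : Om => 1 / (6 * γ) * ((ω'.1 0 + ω'.1 1) * ω'.2 1) +
            (ω'.2 1) ^ 2 / 4) ω +
          γ * Sh (fun ω' : Om => 1 / (6 * γ) * ((ω'.1 0 + ω'.1 1) * ω'.2 1) +
            (ω'.2 1) ^ 2 / 4) ω)) := by
  intro ω
  refine ⟨rfl, ?_⟩
  have hA := Ah_psi (1 / (6 * γ)) ω
  have hS := Sh_psi (1 / (6 * γ)) ω
  unfold psi at hA hS
  rw [hA, hS]
  simp only [shiftOne]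
  norm_num only
  field_simp
  ring
end
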